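/- arXiv:2504.10094 — 3 statements merged into one kernel-verified Lean document; each statement's English description precedes it below -/
import Mathlib

section
/- There exists a universal constant C > 0 with the following property: for every continuously differentiable function w : ℝ² → ℝ with w ≥ 0 and ∇w bounded, and every smooth compactly supported function f : ℝ² → ℝ, one has ‖w^{1/2} f‖_{L⁴(ℝ²)} ≤ C · ( ‖∇w‖_{L^∞(ℝ²)}^{1/2} · ‖f‖_{L²(ℝ²)} + ‖w·∇f‖_{L²(ℝ²)}^{1/2} · ‖f‖_{L²(ℝ²)}^{1/2} ). -/
open MeasureTheory
open scoped ENNReal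

/-!
The estimate is the Gagliardo–Nirenberg–Sobolev inequality `‖u‖_{L²} ≤ K ‖∇u‖_{L¹}` on `ℝ²`
applied to the compactly supported `C¹` function `u = w f²`. Its left-hand side is
`‖w^{1/2} f‖_{L⁴}²`, and `∇u = f² ∇w + 2 w f ∇f`, so that (`eLpNorm_fderiv_mul_sq_le`)
`‖∇u‖_{L¹} ≤ ‖∇w‖_{L^∞} ‖f‖_{L²}² + 2 ‖w ∇f‖_{L²} ‖f‖_{L²}` by the Cauchy–Schwarz inequality.
Taking square roots gives the result with `C = (2K + 1)^{1/2}`.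
-/

lemma enorm_fderiv_mul_sq_le {w f : EuclideanSpace ℝ (Fin 2) → ℝ}
    (hw : Differentiable ℝ w) (hf : Differentiable ℝ f) (x : EuclideanSpace ℝ (Fin 2)) :
    ‖fderiv ℝ (fun y => w y * f y ^ 2) x‖ₑ ≤
      ‖fderiv ℝ w x‖ₑ * ‖f x‖ₑ ^ 2 + 2 * (‖w x * ‖fderiv ℝ f x‖‖ₑ * ‖f x‖ₑ) := by
  have h : HasFDerivAt (fun y => w y * f y ^ 2)
      ((f x ^ 2) • fderiv ℝ w x + (2 * (w x * f x)) • fderiv ℝ f x) x := by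
    convert! (hw x).hasFDerivAt.mul ((hf x).hasFDerivAt.pow 2) using 1
    ext v
    simp
    ring
  rw [h.fderiv]
  refine (enorm_add_le ((f x ^ 2) • fderiv ℝ w x) _).trans (le_of_eq ?_)
  have h2 : ‖(2 : ℝ)‖ₑ = 2 := by
    rw [Real.enorm_eq_ofReal (by norm_num)]
    norm_num
  simp only [enorm_smul, enorm_mul, enorm_pow, enorm_norm, h2]
  ring

lemma eLpNorm_two_sq_eq (f : EuclideanSpace ℝ (Fin 2) → ℝ) :
    eLpNorm f 2 volume ^ 2 = ∫⁻ x, ‖f x‖ₑ ^ 2 := by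
  have h := eLpNorm_nnreal_pow_eq_lintegral (f := f) (p := 2)
    (μ := (volume : Measure (EuclideanSpace ℝ (Fin 2)))) two_ne_zero
  have h2 : ((2 : NNReal) : ℝ) = ((2 : ℕ) : ℝ) := by norm_num
  rw [h2] at h
  simp only [ENNReal.rpow_natCast] at h
  exact_mod_cast h

/-- Cauchy–Schwarz inequality in `L²(ℝ²)`, for extended nonnegative integrals. -/
lemma lintegral_enorm_mul_le {g f : EuclideanSpace ℝ (Fin 2) → ℝ}
    (hg : Continuous g) (hf : Continuous f) :
    ∫⁻ x, ‖g x‖ₑ * ‖f x‖ₑ ≤ eLpNorm g 2 volume * eLpNorm f 2 volume := by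
  have h := ENNReal.lintegral_mul_le_Lp_mul_Lq (volume : Measure (EuclideanSpace ℝ (Fin 2)))
    Real.HolderConjugate.two_two (f := fun x => ‖g x‖ₑ) (g := fun x => ‖f x‖ₑ)
    hg.enorm.aemeasurable hf.enorm.aemeasurable
  simpa [eLpNorm_eq_lintegral_rpow_enorm_toReal two_ne_zero ENNReal.ofNat_ne_top] using h

lemma eLpNorm_fderiv_mul_sq_le {w f : EuclideanSpace ℝ (Fin 2) → ℝ}
    (hw : ContDiff ℝ 1 w) (hf : ContDiff ℝ 1 f) :
    eLpNorm (fderiv ℝ (fun y => w y * f y ^ 2)) 1 volume ≤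
      eLpNorm (fderiv ℝ w) ⊤ volume * eLpNorm f 2 volume ^ 2 +
        2 * (eLpNorm (fun x => w x * ‖fderiv ℝ f x‖) 2 volume * eLpNorm f 2 volume) := by
  have hg : Continuous fun x => w x * ‖fderiv ℝ f x‖ :=
    hw.continuous.mul (hf.continuous_fderiv one_ne_zero).norm
  have hfc : Continuous f := hf.continuous
  have hm : Measurable fun x => ‖w x * ‖fderiv ℝ f x‖‖ₑ * ‖f x‖ₑ :=
    hg.enorm.measurable.mul hfc.enorm.measurable
  rw [eLpNorm_one_eq_lintegral_enorm, eLpNorm_two_sq_eq]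
  calc _ ≤ ∫⁻ x, (‖fderiv ℝ w x‖ₑ * ‖f x‖ₑ ^ 2 +
          2 * (‖w x * ‖fderiv ℝ f x‖‖ₑ * ‖f x‖ₑ)) :=
        lintegral_mono fun x => enorm_fderiv_mul_sq_le
          (hw.differentiable one_ne_zero) (hf.differentiable one_ne_zero) x
    _ = (∫⁻ x, ‖fderiv ℝ w x‖ₑ * ‖f x‖ₑ ^ 2) +
          2 * ∫⁻ x, ‖w x * ‖fderiv ℝ f x‖‖ₑ * ‖f x‖ₑ := by
        rw [lintegral_add_right _ (hm.const_mul 2), lintegral_const_mul _ hm]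
    _ ≤ _ := by
        gcongr
        · rw [← lintegral_const_mul _ (hfc.enorm.measurable.pow_const 2)]
          refine lintegral_mono_ae ?_
          have := enorm_ae_le_eLpNormEssSup (fderiv ℝ w) volume
          filter_upwards [this] with x hx
          rw [eLpNorm_exponent_top]
          gcongr
        · exact lintegral_enorm_mul_le hg hfc

lemma eLpNorm_four_sq_eq {w f : EuclideanSpace ℝ (Fin 2) → ℝ} (hw : ∀ x, 0 ≤ w x) :
    eLpNorm (fun x => w x ^ ((1 : ℝ) / 2) * f x) 4 volume ^ 2 =
      eLpNorm (fun x => w x * f x ^ 2) 2 volume := by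
  have h := eLpNorm_norm_rpow (p := 2) (μ := (volume : Measure (EuclideanSpace ℝ (Fin 2))))
    (fun x => w x ^ ((1 : ℝ) / 2) * f x) (q := 2) two_pos
  have h4 : (2 : ℝ≥0∞) * ENNReal.ofReal 2 = 4 := by norm_num
  rw [h4, ENNReal.rpow_two] at h
  rw [← h]
  congr 1
  ext x
  rw [Real.rpow_two, Real.norm_eq_abs, sq_abs, mul_pow, ← Real.sqrt_eq_rpow, Real.sq_sqrt (hw x)]

/-- Passage to square roots: `(√A B + √(G B))² ≥ A B² + G B`, with the cross term dropped. -/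
lemma le_of_sq_le {X K A B G : ℝ≥0∞} (h : X ^ 2 ≤ K * (A * B ^ 2 + 2 * (G * B))) :
    X ≤ (2 * K + 1) ^ ((1 : ℝ) / 2) *
      (A ^ ((1 : ℝ) / 2) * B + G ^ ((1 : ℝ) / 2) * B ^ ((1 : ℝ) / 2)) := by
  have hs : ∀ a : ℝ≥0∞, (a ^ ((1 : ℝ) / 2)) ^ 2 = a := fun a => by
    rw [← ENNReal.rpow_natCast, ← ENNReal.rpow_mul]
    norm_num
  rw [← ENNReal.pow_le_pow_left_iff two_ne_zero]
  refine h.trans ?_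
  rw [mul_pow, hs]
  calc K * (A * B ^ 2 + 2 * (G * B)) ≤ K * (2 * (A * B ^ 2) + 2 * (G * B)) := by
        gcongr K * (?_ + _)
        rw [two_mul]
        exact le_self_add
    _ = (2 * K) * (A * B ^ 2 + G * B) := by ring
    _ ≤ (2 * K + 1) * (A ^ ((1 : ℝ) / 2) * B + G ^ ((1 : ℝ) / 2) * B ^ ((1 : ℝ) / 2)) ^ 2 := by
        gcongr
        · exact le_self_add
        · rw [add_sq, mul_pow, mul_pow, hs, hs, hs, add_right_comm]
          exact le_self_add

/-- Weighted two-dimensional interpolation inequality (§3.2 of the paper):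
`‖w^{1/2} f‖_{L⁴} ≤ C (‖∇w‖_{L^∞}^{1/2} ‖f‖_{L²} + ‖w ∇f‖_{L²}^{1/2} ‖f‖_{L²}^{1/2})`
for a universal constant `C`, any nonnegative `C¹` weight `w` with bounded gradient,
and any smooth compactly supported `f : ℝ² → ℝ`. -/
theorem weighted_interpolation_L4 :
    ∃ C : ℝ≥0∞, 0 < C ∧ C < ⊤ ∧
      ∀ w f : EuclideanSpace ℝ (Fin 2) → ℝ,
        ContDiff ℝ 1 w → (∀ x, 0 ≤ w x) →
        (∃ M : ℝ, ∀ x, ‖fderiv ℝ w x‖ ≤ M) →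
        ContDiff ℝ (⊤ : ℕ∞) f → HasCompactSupport f →
          eLpNorm (fun x => w x ^ ((1 : ℝ) / 2) * f x) 4 volume ≤
            C * (eLpNorm (fderiv ℝ w) ⊤ volume ^ ((1 : ℝ) / 2) * eLpNorm f 2 volume +
              eLpNorm (fun x => w x * ‖fderiv ℝ f x‖) 2 volume ^ ((1 : ℝ) / 2) *
                eLpNorm f 2 volume ^ ((1 : ℝ) / 2)) := by
  let K : NNReal :=
    eLpNormLESNormFDerivOneConst (volume : Measure (EuclideanSpace ℝ (Fin 2))) (2 : NNReal)
  refine ⟨(2 * (K : ℝ≥0∞) + 1) ^ ((1 : ℝ) / 2), ?_, ?_, ?_⟩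
  · exact ENNReal.rpow_pos (by positivity) (by finiteness)
  · exact ENNReal.rpow_lt_top_of_nonneg (by norm_num) (by finiteness)
  intro w f hw hw0 _ hf hfs
  have hf1 : ContDiff ℝ 1 f := hf.of_le (by exact_mod_cast le_top)
  have hu : ContDiff ℝ 1 fun y => w y * f y ^ 2 := hw.mul (hf1.pow 2)
  have hus : HasCompactSupport fun y => w y * f y ^ 2 := by
    refine hfs.mono fun x hx => ?_
    rw [Function.mem_support] at hx ⊢
    exact fun h0 => hx (by simp [h0])
  have hp : NNReal.HolderConjugate
      ((Module.finrank ℝ (EuclideanSpace ℝ (Fin 2)) : ℕ) : NNReal) 2 := by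
    rw [finrank_euclideanSpace_fin]
    exact_mod_cast NNReal.HolderConjugate.two_two
  apply le_of_sq_le
  rw [eLpNorm_four_sq_eq hw0]
  refine le_trans ?_ (mul_le_mul_right (eLpNorm_fderiv_mul_sq_le hw hf1) _)
  exact_mod_cast eLpNorm_le_eLpNorm_fderiv_one volume hu hus hp
end

section
/- Let α > 0 and β ∈ ℝ with α + β ≥ 0, let 1 < r < ∞ and k ∈ ℕ. Then there exists a constant C > 0, depending only on α, β, r and k, such that for every smooth compactly supported vector field u : ℝ² → ℝ², writing Lu = −αΔu − (α+β)∇(div u), one has ‖∇^{k+2} u‖_{L^r(ℝ²)} ≤ C · ‖∇^{k}(Lu)‖_{L^r(ℝ²)}. -/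
/-!
The estimate rests on one scalar fact: if `ψ` and `f₀, f₁` are test functions on the plane with
`Δψ = ∑ₖ ∂_{v k} ∂_{w k} fₖ`, then `‖ψ‖_p ≤ C ∑ₖ ‖fₖ‖_p` for every `1 < p < ∞` (`lp_norm`). It is
the `L^p` boundedness of second-order Riesz transforms, obtained here from a Bellman function and
the heat flow rather than from singular integral theory.

For conjugate exponents `p, q` there is a nonnegative `C²` function `Q` on `ℝ²`, vanishing at the
origin and bounded by a multiple of `|a|^p + |b|^q` up to a regularisation error, whose Hessian at
each point dominates `τ ξ² + τ⁻¹ η²` for some `τ > 0` (`exists_bellman`). Let `F_s` be the Gaussian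
average of `F` with standard deviation `s`, so that `∂ₛ F_s = s Δ F_s`. For a test function `h`,
integration by parts shows that the `s`-derivative of `∫ ψ_s h_s` is
`-2 s ∑ₖ ∫ ∂_{w k} fₖ,ₛ ∂_{v k} hₛ`, while that of `∑ₖ ∫ Q(fₖ,ₛ, hₛ)` is `-s` times the integral of
the Hessian form of `Q` evaluated on the gradients. The Hessian bound and `2 |ξ η| ≤ τ ξ² + τ⁻¹ η²`
make the first derivative at most minus the second in absolute value. Since `∫ ψ_s h_s → 0` as
`s → ∞`, it follows that `|∫ ψ h| ≤ ∑ₖ ∫ Q(fₖ, h)` (`pairing_le_flow`), hence a bound by `L^p` and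
`L^q` integrals (`bilinear`). Testing with a smooth approximation of a small multiple of
`ψ |ψ|^(p-2)` yields the scalar fact (`lp_integral`).

For the Lamé operator, `div (Lu) = -(2α+β) Δ (div u)`, so the scalar fact controls `∇ div u` by
`Lu`; then `-α Δu = Lu + (α+β) ∇ div u` and a second application control all `∂ₐ∂_b u_c`
(`exists_second_le`). Higher derivatives follow by induction on `k`, because `L` commutes with
partial derivatives (`exists_lame_le`).
-/

open MeasureTheory
open scoped ENNReal

/-- The divergence of a vector field `u : ℝ² → ℝ²`. -/
noncomputable def vecDiv (u : EuclideanSpace ℝ (Fin 2) → EuclideanSpace ℝ (Fin 2)) :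
    EuclideanSpace ℝ (Fin 2) → ℝ :=
  fun x => ∑ i : Fin 2, fderiv ℝ u x (EuclideanSpace.single i 1) i

/-- The componentwise Laplacian of a vector field `u : ℝ² → ℝ²`. -/
noncomputable def vecLap (u : EuclideanSpace ℝ (Fin 2) → EuclideanSpace ℝ (Fin 2)) :
    EuclideanSpace ℝ (Fin 2) → EuclideanSpace ℝ (Fin 2) :=
  fun x => ∑ j : Fin 2,
    iteratedFDeriv ℝ 2 u x ![EuclideanSpace.single j 1, EuclideanSpace.single j 1]

/-- The Lamé operator `Lu = -αΔu - (α+β)∇(div u)`. -/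
noncomputable def lame (α β : ℝ)
    (u : EuclideanSpace ℝ (Fin 2) → EuclideanSpace ℝ (Fin 2)) :
    EuclideanSpace ℝ (Fin 2) → EuclideanSpace ℝ (Fin 2) :=
  fun x => (-α) • vecLap u x - (α + β) • gradient (vecDiv u) x

/-! ### The Bellman function -/

/-- A function `Q` of two real variables together with its partial derivatives up to order two. -/
structure C2Fun where
  Q : ℝ × ℝ → ℝ
  Qa : ℝ × ℝ → ℝ
  Qb : ℝ × ℝ → ℝ
  Qaa : ℝ × ℝ → ℝ
  Qab : ℝ × ℝ → ℝ
  Qbb : ℝ × ℝ → ℝ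
  hQ : ∀ z, HasFDerivAt Q
    (Qa z • ContinuousLinearMap.fst ℝ ℝ ℝ + Qb z • ContinuousLinearMap.snd ℝ ℝ ℝ) z
  hQa : ∀ z, HasFDerivAt Qa
    (Qaa z • ContinuousLinearMap.fst ℝ ℝ ℝ + Qab z • ContinuousLinearMap.snd ℝ ℝ ℝ) z
  hQb : ∀ z, HasFDerivAt Qb
    (Qab z • ContinuousLinearMap.fst ℝ ℝ ℝ + Qbb z • ContinuousLinearMap.snd ℝ ℝ ℝ) z
  cQaa : Continuous Qaa
  cQab : Continuous Qab
  cQbb : Continuous Qbb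

/-- The second derivative of `Q` at `z` applied twice to `(ξ, η)`. -/
def C2Fun.hess (B : C2Fun) (z : ℝ × ℝ) (ξ η : ℝ) : ℝ :=
  B.Qaa z * ξ ^ 2 + 2 * B.Qab z * ξ * η + B.Qbb z * η ^ 2

lemma hasDerivAt_reg (p : ℝ) {ε : ℝ} (hε : 0 < ε) (a : ℝ) :
    HasDerivAt (fun a : ℝ => (a ^ 2 + ε ^ 2) ^ p) (2 * p * a * (a ^ 2 + ε ^ 2) ^ (p - 1)) a := by
  have h1 : HasDerivAt (fun a : ℝ => a ^ 2 + ε ^ 2) (2 * a) a := by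
    simpa using (hasDerivAt_pow 2 a).add_const (ε ^ 2)
  have := h1.rpow_const (p := p) (Or.inl (by positivity))
  convert this using 1
  ring

lemma hasDerivAt_reg' (p : ℝ) {ε : ℝ} (hε : 0 < ε) (a : ℝ) :
    HasDerivAt (fun a : ℝ => 2 * p * a * (a ^ 2 + ε ^ 2) ^ (p - 1))
      (2 * p * (a ^ 2 + ε ^ 2) ^ (p - 1) +
        2 * p * a * (2 * (p - 1) * a * (a ^ 2 + ε ^ 2) ^ (p - 1 - 1))) a := by
  have h1 : HasDerivAt (fun a : ℝ => 2 * p * a) (2 * p) a := by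
    simpa using (hasDerivAt_id a).const_mul (2 * p)
  exact h1.mul (hasDerivAt_reg (p - 1) hε a)

lemma continuous_reg (p : ℝ) {ε : ℝ} (hε : 0 < ε) :
    Continuous (fun a : ℝ => (a ^ 2 + ε ^ 2) ^ p) :=
  Continuous.rpow_const (by fun_prop) (fun a => Or.inl (by positivity))

lemma hasFDerivAt_fst_sq (z : ℝ × ℝ) : HasFDerivAt (fun z : ℝ × ℝ => z.1 ^ 2)
    ((2 * z.1) • ContinuousLinearMap.fst ℝ ℝ ℝ) z := by
  have hf₁ : HasFDerivAt (Prod.fst : ℝ × ℝ → ℝ) (ContinuousLinearMap.fst ℝ ℝ ℝ) z :=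
    hasFDerivAt_fst
  have := hf₁.pow 2
  refine this.congr_fderiv ?_
  ext <;> simp

/-- The second-order data of `A (X(a) - x₀) + B (Y(b) - y₀) + a² (X(a) + Y(b))^θ`
for positive functions `X`, `Y` of one variable. -/
noncomputable def mkC2 (A B x₀ y₀ θ : ℝ) (X X' X'' Y Y' Y'' : ℝ → ℝ)
    (hX : ∀ a, HasDerivAt X (X' a) a) (hX' : ∀ a, HasDerivAt X' (X'' a) a)
    (cX : Continuous X'') (hX0 : ∀ a, 0 < X a)
    (hY : ∀ a, HasDerivAt Y (Y' a) a) (hY' : ∀ a, HasDerivAt Y' (Y'' a) a)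
    (cY : Continuous Y'') (hY0 : ∀ a, 0 < Y a) : C2Fun where
  Q z := A * (X z.1 - x₀) + B * (Y z.2 - y₀) + z.1 ^ 2 * (X z.1 + Y z.2) ^ θ
  Qa z := A * X' z.1 + 2 * z.1 * (X z.1 + Y z.2) ^ θ +
    z.1 ^ 2 * (θ * (X z.1 + Y z.2) ^ (θ - 1) * X' z.1)
  Qb z := B * Y' z.2 + z.1 ^ 2 * (θ * (X z.1 + Y z.2) ^ (θ - 1) * Y' z.2)
  Qaa z := A * X'' z.1 + 2 * (X z.1 + Y z.2) ^ θ +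
    4 * z.1 * (θ * (X z.1 + Y z.2) ^ (θ - 1) * X' z.1) +
    z.1 ^ 2 * (θ * (θ - 1) * (X z.1 + Y z.2) ^ (θ - 1 - 1) * X' z.1 ^ 2) +
    z.1 ^ 2 * (θ * (X z.1 + Y z.2) ^ (θ - 1) * X'' z.1)
  Qab z := 2 * z.1 * (θ * (X z.1 + Y z.2) ^ (θ - 1) * Y' z.2) +
    z.1 ^ 2 * (θ * (θ - 1) * (X z.1 + Y z.2) ^ (θ - 1 - 1) * X' z.1 * Y' z.2)
  Qbb z := B * Y'' z.2 + z.1 ^ 2 * (θ * (θ - 1) * (X z.1 + Y z.2) ^ (θ - 1 - 1) * Y' z.2 ^ 2) +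
    z.1 ^ 2 * (θ * (X z.1 + Y z.2) ^ (θ - 1) * Y'' z.2)
  hQ z := by
    have hf₁ : HasFDerivAt (Prod.fst : ℝ × ℝ → ℝ) (ContinuousLinearMap.fst ℝ ℝ ℝ) z :=
      hasFDerivAt_fst
    have hf₂ : HasFDerivAt (Prod.snd : ℝ × ℝ → ℝ) (ContinuousLinearMap.snd ℝ ℝ ℝ) z :=
      hasFDerivAt_snd
    have h1 := (hX z.1).comp_hasFDerivAt z hf₁
    have h2 := (hY z.2).comp_hasFDerivAt z hf₂
    have h3 := (h1.add h2).rpow_const (p := θ) (Or.inl (add_pos (hX0 _) (hY0 _)).ne')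
    have h4 := hasFDerivAt_fst_sq z
    have := (((h1.sub_const x₀).const_mul A).add ((h2.sub_const y₀).const_mul B)).add (h4.mul h3)
    refine this.congr_fderiv ?_
    ext <;> simp [-mul_eq_mul_left_iff, -mul_eq_mul_right_iff] <;> ring
  hQa z := by
    have hf₁ : HasFDerivAt (Prod.fst : ℝ × ℝ → ℝ) (ContinuousLinearMap.fst ℝ ℝ ℝ) z :=
      hasFDerivAt_fst
    have hf₂ : HasFDerivAt (Prod.snd : ℝ × ℝ → ℝ) (ContinuousLinearMap.snd ℝ ℝ ℝ) z :=
      hasFDerivAt_snd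
    have h1 := (hX z.1).comp_hasFDerivAt z hf₁
    have h2 := (hY z.2).comp_hasFDerivAt z hf₂
    have h1' := (hX' z.1).comp_hasFDerivAt z hf₁
    have h3 := (h1.add h2).rpow_const (p := θ) (Or.inl (add_pos (hX0 _) (hY0 _)).ne')
    have h3' := (h1.add h2).rpow_const (p := θ - 1) (Or.inl (add_pos (hX0 _) (hY0 _)).ne')
    have h4 := hasFDerivAt_fst_sq z
    have h5 : HasFDerivAt (fun z : ℝ × ℝ => 2 * z.1)
      ((2 : ℝ) • ContinuousLinearMap.fst ℝ ℝ ℝ) z := hf₁.const_mul 2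
    have := ((h1'.const_mul A).add (h5.mul h3)).add (h4.mul ((h3'.const_mul θ).mul h1'))
    refine this.congr_fderiv ?_
    ext <;> simp [-mul_eq_mul_left_iff, -mul_eq_mul_right_iff] <;> ring
  hQb z := by
    have hf₁ : HasFDerivAt (Prod.fst : ℝ × ℝ → ℝ) (ContinuousLinearMap.fst ℝ ℝ ℝ) z :=
      hasFDerivAt_fst
    have hf₂ : HasFDerivAt (Prod.snd : ℝ × ℝ → ℝ) (ContinuousLinearMap.snd ℝ ℝ ℝ) z :=
      hasFDerivAt_snd
    have h1 := (hX z.1).comp_hasFDerivAt z hf₁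
    have h2 := (hY z.2).comp_hasFDerivAt z hf₂
    have h2' := (hY' z.2).comp_hasFDerivAt z hf₂
    have h3' := (h1.add h2).rpow_const (p := θ - 1) (Or.inl (add_pos (hX0 _) (hY0 _)).ne')
    have h4 := hasFDerivAt_fst_sq z
    have := (h2'.const_mul B).add (h4.mul ((h3'.const_mul θ).mul h2'))
    refine this.congr_fderiv ?_
    ext <;> simp [-mul_eq_mul_left_iff, -mul_eq_mul_right_iff] <;> ring
  cQaa := by
    have c1 : Continuous X := continuous_iff_continuousAt.2 fun a => (hX a).continuousAt
    have c2 : Continuous Y := continuous_iff_continuousAt.2 fun a => (hY a).continuousAt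
    have c3 : Continuous X' := continuous_iff_continuousAt.2 fun a => (hX' a).continuousAt
    have c4 (t : ℝ) : Continuous fun z : ℝ × ℝ => (X z.1 + Y z.2) ^ t :=
      Continuous.rpow_const (by fun_prop) fun z => Or.inl (add_pos (hX0 _) (hY0 _)).ne'
    have := c4 θ
    have := c4 (θ - 1)
    have := c4 (θ - 1 - 1)
    fun_prop
  cQab := by
    have c1 : Continuous X := continuous_iff_continuousAt.2 fun a => (hX a).continuousAt
    have c2 : Continuous Y := continuous_iff_continuousAt.2 fun a => (hY a).continuousAt
    have c3 : Continuous X' := continuous_iff_continuousAt.2 fun a => (hX' a).continuousAt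
    have c5 : Continuous Y' := continuous_iff_continuousAt.2 fun a => (hY' a).continuousAt
    have c4 (t : ℝ) : Continuous fun z : ℝ × ℝ => (X z.1 + Y z.2) ^ t :=
      Continuous.rpow_const (by fun_prop) fun z => Or.inl (add_pos (hX0 _) (hY0 _)).ne'
    have := c4 (θ - 1)
    have := c4 (θ - 1 - 1)
    fun_prop
  cQbb := by
    have c1 : Continuous X := continuous_iff_continuousAt.2 fun a => (hX a).continuousAt
    have c2 : Continuous Y := continuous_iff_continuousAt.2 fun a => (hY a).continuousAt
    have c5 : Continuous Y' := continuous_iff_continuousAt.2 fun a => (hY' a).continuousAt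
    have c4 (t : ℝ) : Continuous fun z : ℝ × ℝ => (X z.1 + Y z.2) ^ t :=
      Continuous.rpow_const (by fun_prop) fun z => Or.inl (add_pos (hX0 _) (hY0 _)).ne'
    have := c4 (θ - 1)
    have := c4 (θ - 1 - 1)
    fun_prop

set_option maxHeartbeats 1000000 in
/-- The lower bound for the Hessian of the function in `mkC2`, at a single point `(a, b)`.
Here `u`, `v` stand for `a² + ε²`, `b² + ε²`; then `X = u^(p/2)`, `Y = v^(q/2)`, and `X1, X2, Y1, Y2`
are their first and second derivatives. With `τ = (X + Y)^θ`, the summand `a² (X + Y)^θ` contributes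
`2 τ ξ²` together with terms of unfavourable sign, and these are absorbed by the convex summands
`A X` and `B Y`. -/
lemma hess_core {p q s t θ A B a b u v X Y X1 X2 Y1 Y2 : ℝ}
    (hp : 2 ≤ p) (hq : 1 < q) (hq2 : q ≤ 2) (hs : s = p / 2) (ht : t = q / 2)
    (hθ : θ = 1 - 2 / p) (hpq : t * θ = 1 - t)
    (hau : a ^ 2 ≤ u) (hbv : b ^ 2 ≤ v) (hu : 0 < u) (hv : 0 < v)
    (hX : X = u ^ s) (hY : Y = v ^ t)
    (hX1 : X1 = 2 * s * a * u ^ (s - 1))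
    (hX2 : X2 = 2 * s * u ^ (s - 1) + 2 * s * a * (2 * (s - 1) * a * u ^ (s - 1 - 1)))
    (hY1 : Y1 = 2 * t * b * v ^ (t - 1))
    (hY2 : Y2 = 2 * t * v ^ (t - 1) + 2 * t * b * (2 * (t - 1) * b * v ^ (t - 1 - 1)))
    (hA : A = p) (hB : B * (q * (q - 1)) = (2 * q + p * q) ^ 2 + 1 + q ^ 2) :
    ∃ τ : ℝ, 0 < τ ∧ ∀ ξ η : ℝ, τ * ξ ^ 2 + τ⁻¹ * η ^ 2 ≤
      (A * X2 + 2 * (X + Y) ^ θ + 4 * a * (θ * (X + Y) ^ (θ - 1) * X1) +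
        a ^ 2 * (θ * (θ - 1) * (X + Y) ^ (θ - 1 - 1) * X1 ^ 2) +
        a ^ 2 * (θ * (X + Y) ^ (θ - 1) * X2)) * ξ ^ 2 +
      2 * (2 * a * (θ * (X + Y) ^ (θ - 1) * Y1) +
        a ^ 2 * (θ * (θ - 1) * (X + Y) ^ (θ - 1 - 1) * X1 * Y1)) * ξ * η +
      (B * Y2 + a ^ 2 * (θ * (θ - 1) * (X + Y) ^ (θ - 1 - 1) * Y1 ^ 2) +
        a ^ 2 * (θ * (X + Y) ^ (θ - 1) * Y2)) * η ^ 2 := by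
  have hp0 : 0 < p := by linarith
  have hXp : 0 < X := hX ▸ Real.rpow_pos_of_pos hu _
  have hYp : 0 < Y := hY ▸ Real.rpow_pos_of_pos hv _
  have hP : 0 < X + Y := by positivity
  set P := X + Y with hPdef
  have hXP : X ≤ P := by linarith
  have hYP : Y ≤ P := by linarith
  have hθ0 : 0 ≤ θ := by
    rw [hθ, sub_nonneg, div_le_one hp0]; exact hp
  have hθ1 : θ ≤ 1 := by
    rw [hθ]; have : 0 ≤ 2 / p := by positivity
    linarith
  have hsθ : s * θ = s - 1 := by
    rw [hs, hθ]; field_simp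
  set n2 := u ^ (s - 1) with hn2
  set m2 := v ^ (t - 1) with hm2
  set M2 := P ^ θ with hM2
  set R := P ^ (θ - 1) with hR
  set S := P ^ (θ - 1 - 1) with hS
  have hn0 : 0 < n2 := Real.rpow_pos_of_pos hu _
  have hm0 : 0 < m2 := Real.rpow_pos_of_pos hv _
  have hM0 : 0 < M2 := Real.rpow_pos_of_pos hP _
  have hR0 : 0 < R := Real.rpow_pos_of_pos hP _
  have hS0 : 0 < S := Real.rpow_pos_of_pos hP _
  have hun : u * n2 = X := by
    rw [hX, hn2, mul_comm, Real.rpow_sub_one hu.ne']; field_simp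
  have hvm : v * m2 = Y := by
    rw [hY, hm2, mul_comm, Real.rpow_sub_one hv.ne']; field_simp
  have hun' : u * u ^ (s - 1 - 1) = n2 := by
    rw [hn2, Real.rpow_sub_one hu.ne']; field_simp
  have hvm' : v * v ^ (t - 1 - 1) = m2 := by
    rw [hm2, Real.rpow_sub_one hv.ne']; field_simp
  have hRM : M2 * S = R ^ 2 := by
    rw [hM2, hS, hR, sq, ← Real.rpow_add hP, ← Real.rpow_add hP]; congr 1; ring
  have huP : u ≤ P ^ (1 - θ) := by
    have h1 : u = X ^ (1 - θ) := by
      rw [hX, ← Real.rpow_mul hu.le]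
      have : s * (1 - θ) = 1 := by linarith
      rw [this, Real.rpow_one]
    rw [h1]
    exact Real.rpow_le_rpow hXp.le hXP (by linarith)
  -- since `a² ≤ u ≤ P^(1-θ)`, each factor `a² (X + Y)^(θ-2)` costs at most `(X + Y)⁻¹`
  have hκ : a ^ 2 * S * P ≤ 1 := by
    have h1 : P ^ (1 - θ) * S * P = 1 := by
      rw [hS, ← Real.rpow_add hP]
      have : 1 - θ + (θ - 1 - 1) = -1 := by ring
      rw [this, Real.rpow_neg_one]; field_simp
    have h2 : a ^ 2 * S * P ≤ P ^ (1 - θ) * S * P := by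
      gcongr; exact hau.trans huP
    linarith
  have hn2M : n2 ≤ M2 := by
    have h1 : n2 = X ^ θ := by rw [hX, ← Real.rpow_mul hu.le, hsθ]
    rw [h1]; exact Real.rpow_le_rpow hXp.le hXP hθ0
  have hMm : 1 ≤ M2 * m2 := by
    have h1 : v ^ (1 - t) ≤ M2 := by
      rw [← hpq, Real.rpow_mul hv.le, ← hY]
      exact Real.rpow_le_rpow hYp.le hYP hθ0
    have h2 : v ^ (1 - t) * m2 = 1 := by
      rw [hm2, ← Real.rpow_add hv]; simp
    calc 1 = v ^ (1 - t) * m2 := h2.symm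
      _ ≤ M2 * m2 := by gcongr
  have hX1sq : X1 ^ 2 ≤ p ^ 2 * (P * n2) := by
    have : X1 ^ 2 = p ^ 2 * (a ^ 2 * n2 * n2) := by rw [hX1, hs]; ring
    rw [this]
    have : a ^ 2 * n2 * n2 ≤ P * n2 := by
      have : a ^ 2 * n2 ≤ P := by
        calc a ^ 2 * n2 ≤ u * n2 := by gcongr
          _ ≤ P := by rw [hun]; exact hXP
      gcongr
    gcongr
  have hY1sq : Y1 ^ 2 ≤ q ^ 2 * (P * m2) := by
    have : Y1 ^ 2 = q ^ 2 * (b ^ 2 * m2 * m2) := by rw [hY1, ht]; ring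
    rw [this]
    have : b ^ 2 * m2 * m2 ≤ P * m2 := by
      have : b ^ 2 * m2 ≤ P := by
        calc b ^ 2 * m2 ≤ v * m2 := by gcongr
          _ ≤ P := by rw [hvm]; exact hYP
      gcongr
    gcongr
  have hkX : a ^ 2 * S * X1 ^ 2 ≤ p ^ 2 * n2 := by
    calc a ^ 2 * S * X1 ^ 2 ≤ a ^ 2 * S * (p ^ 2 * (P * n2)) := by gcongr
      _ = (a ^ 2 * S * P) * (p ^ 2 * n2) := by ring
      _ ≤ 1 * (p ^ 2 * n2) := by gcongr
      _ = _ := one_mul _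
  have hkY : a ^ 2 * S * Y1 ^ 2 ≤ q ^ 2 * m2 := by
    calc a ^ 2 * S * Y1 ^ 2 ≤ a ^ 2 * S * (q ^ 2 * (P * m2)) := by gcongr
      _ = (a ^ 2 * S * P) * (q ^ 2 * m2) := by ring
      _ ≤ 1 * (q ^ 2 * m2) := by gcongr
      _ = _ := one_mul _
  have hX2l : p * n2 ≤ X2 := by
    have h1 : 0 ≤ 2 * s * a * (2 * (s - 1) * a * u ^ (s - 1 - 1)) := by
      have : 0 ≤ (a ^ 2 * u ^ (s - 1 - 1)) * (4 * s * (s - 1)) := by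
        have : 0 ≤ s - 1 := by rw [hs]; linarith
        have : 0 < s := by linarith
        positivity
      linarith
    rw [hX2]
    have : 2 * s * n2 = p * n2 := by rw [hs]; ring
    linarith
  have hY2l : q * (q - 1) * m2 ≤ Y2 := by
    have h1 : b ^ 2 * v ^ (t - 1 - 1) ≤ m2 := by
      rw [← hvm']; gcongr
    have h2 : Y2 = q * m2 - q * (2 - q) * (b ^ 2 * v ^ (t - 1 - 1)) := by rw [hY2, ht]; ring
    have h3 : q * (2 - q) * (b ^ 2 * v ^ (t - 1 - 1)) ≤ q * (2 - q) * m2 := by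
      have : 0 ≤ 2 - q := by linarith
      gcongr
    rw [h2]; linarith
  have haX1 : 0 ≤ a * X1 := by
    have : a * X1 = p * (a ^ 2 * n2) := by rw [hX1, hs]; ring
    rw [this]; positivity
  have hX20 : 0 ≤ X2 := le_trans (by positivity) hX2l
  have hY20 : 0 ≤ Y2 := le_trans (by have : 0 ≤ q - 1 := by linarith
                                     positivity) hY2l
  have hθθ : 0 ≤ θ * (1 - θ) ∧ θ * (1 - θ) ≤ 1 :=
    ⟨mul_nonneg hθ0 (by linarith), mul_le_one₀ hθ1 (by linarith) (by linarith)⟩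
  -- the three entries of the Hessian are bounded in terms of `M2 = (X + Y)^θ` and `m2 = v^(t-1)`
  set Qaa := A * X2 + 2 * M2 + 4 * a * (θ * R * X1) + a ^ 2 * (θ * (θ - 1) * S * X1 ^ 2) +
    a ^ 2 * (θ * R * X2) with hQaa
  set Qab := 2 * a * (θ * R * Y1) + a ^ 2 * (θ * (θ - 1) * S * X1 * Y1) with hQab
  set Qbb := B * Y2 + a ^ 2 * (θ * (θ - 1) * S * Y1 ^ 2) + a ^ 2 * (θ * R * Y2) with hQbb
  have e1 : 2 * M2 ≤ Qaa := by
    have h1 : 0 ≤ 4 * a * (θ * R * X1) := by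
      have : 0 ≤ 4 * θ * R * (a * X1) := by positivity
      linarith
    have h2 : 0 ≤ a ^ 2 * (θ * R * X2) := by positivity
    have h3 : θ * (1 - θ) * (a ^ 2 * S * X1 ^ 2) ≤ 1 * (p ^ 2 * n2) :=
      mul_le_mul hθθ.2 hkX (by positivity) zero_le_one
    have h4 : p * (p * n2) ≤ A * X2 := by rw [hA]; gcongr
    rw [hQaa]
    linarith
  have e3 : ((2 * q + p * q) ^ 2 + 1) * m2 ≤ Qbb := by
    have h2 : 0 ≤ a ^ 2 * (θ * R * Y2) := by positivity
    have h3 : θ * (1 - θ) * (a ^ 2 * S * Y1 ^ 2) ≤ 1 * (q ^ 2 * m2) :=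
      mul_le_mul hθθ.2 hkY (by positivity) zero_le_one
    have hB0 : 0 ≤ B := by
      have h6 : 0 < q * (q - 1) := mul_pos (by linarith) (by linarith)
      have h7 : 0 < B * (q * (q - 1)) := by rw [hB]; positivity
      exact (pos_of_mul_pos_left h7 h6.le).le
    have h4 : B * (q * (q - 1) * m2) ≤ B * Y2 := by gcongr
    have h5 : B * (q * (q - 1) * m2) = ((2 * q + p * q) ^ 2 + 1 + q ^ 2) * m2 := by
      rw [← hB]; ring
    rw [hQbb]
    linarith
  set M := Real.sqrt M2 with hM
  set m := Real.sqrt m2 with hm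
  have hMM : M ^ 2 = M2 := Real.sq_sqrt hM0.le
  have hmm : m ^ 2 = m2 := Real.sq_sqrt hm0.le
  have hMpos : 0 < M := Real.sqrt_pos.2 hM0
  have hmpos : 0 < m := Real.sqrt_pos.2 hm0
  have e2 : |Qab| ≤ (2 * q + p * q) * (M * m) := by
    have h1 : |a * R * Y1| ≤ q * (M * m) := by
      apply abs_le_of_sq_le_sq _ (by positivity)
      calc (a * R * Y1) ^ 2 = (a ^ 2 * S * Y1 ^ 2) * M2 := by
            have : (a * R * Y1) ^ 2 = a ^ 2 * R ^ 2 * Y1 ^ 2 := by ring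
            rw [this, ← hRM]; ring
        _ ≤ (q ^ 2 * m2) * M2 := by gcongr
        _ = (q * (M * m)) ^ 2 := by rw [← hMM, ← hmm]; ring
    have h2 : |a ^ 2 * S * X1 * Y1| ≤ p * q * (M * m) := by
      apply abs_le_of_sq_le_sq _ (by positivity)
      calc (a ^ 2 * S * X1 * Y1) ^ 2 = (a ^ 2 * S * X1 ^ 2) * (a ^ 2 * S * Y1 ^ 2) := by ring
        _ ≤ (p ^ 2 * n2) * (q ^ 2 * m2) := by gcongr
        _ ≤ (p ^ 2 * M2) * (q ^ 2 * m2) := by gcongr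
        _ = (p * q * (M * m)) ^ 2 := by rw [← hMM, ← hmm]; ring
    have h3 : Qab = 2 * θ * (a * R * Y1) + -(θ * (1 - θ)) * (a ^ 2 * S * X1 * Y1) := by
      rw [hQab]; ring
    rw [h3]
    refine (abs_add_le _ _).trans ?_
    rw [abs_mul, abs_mul (-(θ * (1 - θ))), abs_neg, abs_of_nonneg hθθ.1,
      abs_of_nonneg (show 0 ≤ 2 * θ by positivity)]
    have h4 : 2 * θ * |a * R * Y1| ≤ 2 * 1 * (q * (M * m)) := by gcongr
    have h5 : θ * (1 - θ) * |a ^ 2 * S * X1 * Y1| ≤ 1 * (p * q * (M * m)) :=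
      mul_le_mul hθθ.2 h2 (abs_nonneg _) zero_le_one
    linarith
  refine ⟨M2, hM0, fun ξ η => ?_⟩
  -- half of the `ξ²` term and part of the `η²` term absorb the mixed term by completing a square
  have f1 : M2⁻¹ ≤ m2 := by
    rw [inv_le_iff_one_le_mul₀' hM0]; exact hMm
  have f2 : -((2 * q + p * q) * (M * m) * (|ξ| * |η|)) ≤ Qab * ξ * η := by
    have : |Qab * ξ * η| ≤ (2 * q + p * q) * (M * m) * (|ξ| * |η|) := by
      rw [abs_mul, abs_mul, mul_assoc]; gcongr
    exact neg_le_of_abs_le this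
  have f3 : 2 * M2 * ξ ^ 2 ≤ Qaa * ξ ^ 2 := by gcongr
  have f4 : ((2 * q + p * q) ^ 2 + 1) * m2 * η ^ 2 ≤ Qbb * η ^ 2 := by gcongr
  have f5 : M2⁻¹ * η ^ 2 ≤ m2 * η ^ 2 := by gcongr
  have f6 := sq_nonneg (M * |ξ| - (2 * q + p * q) * m * |η|)
  have f7 : (M * |ξ| - (2 * q + p * q) * m * |η|) ^ 2 = M2 * ξ ^ 2 -
      2 * ((2 * q + p * q) * (M * m) * (|ξ| * |η|)) + (2 * q + p * q) ^ 2 * m2 * η ^ 2 := by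
    rw [← hMM, ← hmm, ← sq_abs ξ, ← sq_abs η]; ring
  linarith

lemma reg_le {p ε : ℝ} (hp : 1 ≤ p) (hε : 0 < ε) (a : ℝ) :
    (a ^ 2 + ε ^ 2) ^ (p / 2) ≤ 2 ^ (p - 1) * (|a| ^ p + ε ^ p) := by
  have h1 : a ^ 2 + ε ^ 2 ≤ (|a| + ε) ^ 2 := by
    have := abs_nonneg a
    rw [← sq_abs a]; nlinarith
  have h2 : (a ^ 2 + ε ^ 2) ^ (p / 2) ≤ ((|a| + ε) ^ 2) ^ (p / 2) :=
    Real.rpow_le_rpow (by positivity) h1 (by positivity)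
  have h3 : ((|a| + ε) ^ 2) ^ (p / 2) = (|a| + ε) ^ p := by
    rw [← Real.rpow_natCast, ← Real.rpow_mul (by positivity)]; congr 1; push_cast; ring
  rw [h3] at h2
  refine h2.trans ?_
  have := NNReal.rpow_add_le_mul_rpow_add_rpow ⟨|a|, abs_nonneg a⟩ ⟨ε, hε.le⟩ hp
  exact_mod_cast this

lemma le_reg {p ε : ℝ} (hp : 0 ≤ p) (hε : 0 < ε) (a : ℝ) :
    ε ^ p ≤ (a ^ 2 + ε ^ 2) ^ (p / 2) := by
  have h3 : (ε ^ 2) ^ (p / 2) = ε ^ p := by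
    rw [← Real.rpow_natCast, ← Real.rpow_mul (by positivity)]; congr 1; push_cast; ring
  rw [← h3]
  exact Real.rpow_le_rpow (by positivity) (by nlinarith [sq_nonneg a]) (by positivity)

/-- A Bellman function for the exponents `p, q`, regularised at scale `ε` so as to be `C²`: it
vanishes at the origin, lies between `0` and `C (|a|^p + |b|^q)` up to an error governed by `ε`, and
its Hessian form dominates `τ ξ² + τ⁻¹ η²`, hence `2 |ξ η|`. The separate squares, with the same `τ`
for all `(ξ, η)`, allow `ξ` and `η` to come from derivatives in different directions. -/
structure IsBellman (p q C ε : ℝ) (B : C2Fun) : Prop where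
  zero : B.Q 0 = 0
  nonneg : ∀ z, 0 ≤ B.Q z
  le : ∀ a b, B.Q (a, b) ≤ C * (|a| ^ p + ε ^ p + (|b| ^ q + ε ^ q))
  hess : ∀ z, ∃ τ : ℝ, 0 < τ ∧ ∀ ξ η : ℝ, τ * ξ ^ 2 + τ⁻¹ * η ^ 2 ≤ B.hess z ξ η

/-- For `p ≥ 2` the Bellman function is `p (X - ε^p) + B (Y - ε^q) + a² (X + Y)^(1 - 2/p)` with
`X = (a² + ε²)^(p/2)`, `Y = (b² + ε²)^(q/2)` and `B` large. -/
lemma bellman_of_two_le {p q : ℝ} (hp : 2 ≤ p) (hpq : p.HolderConjugate q) :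
    ∃ C : ℝ, 0 < C ∧ ∀ ε : ℝ, 0 < ε → ∃ B : C2Fun, IsBellman p q C ε B := by
  have hp0 : 0 < p := by linarith
  have hq : 1 < q := hpq.symm.lt
  have hmul : p + q = p * q := by
    have := hpq.mul_eq_add; linarith
  have hq2 : q ≤ 2 := by nlinarith
  set Bc : ℝ := ((2 * q + p * q) ^ 2 + 1 + q ^ 2) / (q * (q - 1)) with hBc
  have hqq : 0 < q * (q - 1) := by nlinarith
  have hB0 : 0 < Bc := by positivity
  refine ⟨(p + Bc + 1) * (2 ^ (p - 1) + 2 ^ (q - 1)), by positivity, fun ε hε => ?_⟩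
  have hθ0 : 0 ≤ 1 - 2 / p := by
    rw [sub_nonneg, div_le_one hp0]; exact hp
  refine ⟨mkC2 p Bc (ε ^ p) (ε ^ q) (1 - 2 / p)
    (fun a => (a ^ 2 + ε ^ 2) ^ (p / 2)) _ _ (fun a => (a ^ 2 + ε ^ 2) ^ (q / 2)) _ _
    (hasDerivAt_reg _ hε) (hasDerivAt_reg' _ hε)
    (by have h1 := continuous_reg (p / 2 - 1) hε
        have h2 := continuous_reg (p / 2 - 1 - 1) hε
        fun_prop) (fun a => by positivity)
    (hasDerivAt_reg _ hε) (hasDerivAt_reg' _ hε)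
    (by have h1 := continuous_reg (q / 2 - 1) hε
        have h2 := continuous_reg (q / 2 - 1 - 1) hε
        fun_prop) (fun a => by positivity), ?_, ?_, ?_, ?_⟩
  · have h3 (p : ℝ) : (ε ^ 2) ^ (p / 2) = ε ^ p := by
      rw [← Real.rpow_natCast, ← Real.rpow_mul (by positivity)]; congr 1; push_cast; ring
    simp [mkC2, h3]
  · intro z
    have h1 := le_reg hp0.le hε z.1
    have h2 := le_reg (by linarith : 0 ≤ q) hε z.2
    simp only [mkC2]
    have h3 : 0 ≤ (z.1 ^ 2 + ε ^ 2) ^ (p / 2) - ε ^ p := by linarith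
    have h4 : 0 ≤ (z.2 ^ 2 + ε ^ 2) ^ (q / 2) - ε ^ q := by linarith
    positivity
  · intro a b
    simp only [mkC2]
    have h1 := reg_le (by linarith : 1 ≤ p) hε a
    have h2 := reg_le hq.le hε b
    set X := (a ^ 2 + ε ^ 2) ^ (p / 2) with hX
    set Y := (b ^ 2 + ε ^ 2) ^ (q / 2) with hY
    have hX0 : 0 < X := by positivity
    have hY0 : 0 < Y := by positivity
    have h3 : a ^ 2 * (X + Y) ^ (1 - 2 / p) ≤ X + Y := by
      have : a ^ 2 ≤ (X + Y) ^ (2 / p) := by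
        calc a ^ 2 ≤ a ^ 2 + ε ^ 2 := by nlinarith
          _ = X ^ (2 / p) := by
            rw [hX, ← Real.rpow_mul (by positivity)]
            have : p / 2 * (2 / p) = 1 := by field_simp
            rw [this, Real.rpow_one]
          _ ≤ (X + Y) ^ (2 / p) :=
            Real.rpow_le_rpow hX0.le (by linarith) (by positivity)
      calc a ^ 2 * (X + Y) ^ (1 - 2 / p) ≤ (X + Y) ^ (2 / p) * (X + Y) ^ (1 - 2 / p) := by gcongr
        _ = X + Y := by
          rw [← Real.rpow_add (by positivity)]; simp
    have h4 : 0 < ε ^ p := by positivity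
    have h5 : 0 < ε ^ q := by positivity
    have h6 : X + Y ≤ (2 ^ (p - 1) + 2 ^ (q - 1)) * (|a| ^ p + ε ^ p + (|b| ^ q + ε ^ q)) := by
      have g1 : 0 ≤ (2 : ℝ) ^ (p - 1) * (|b| ^ q + ε ^ q) := by positivity
      have g2 : 0 ≤ (2 : ℝ) ^ (q - 1) * (|a| ^ p + ε ^ p) := by positivity
      nlinarith
    calc _ ≤ p * X + Bc * Y + (X + Y) := by nlinarith
      _ ≤ (p + Bc + 1) * (X + Y) := by nlinarith
      _ ≤ _ := by rw [mul_assoc]; gcongr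
  · intro z
    simp only [C2Fun.hess, mkC2]
    exact hess_core (u := z.1 ^ 2 + ε ^ 2) (v := z.2 ^ 2 + ε ^ 2) (b := z.2) hp hq hq2 rfl rfl rfl
      (by field_simp; linarith) (by nlinarith) (by nlinarith) (by positivity) (by positivity)
      rfl rfl rfl rfl rfl rfl rfl (by rw [hBc, div_mul_cancel₀ _ hqq.ne'])

/-- The data of `(a, b) ↦ Q (b, a)`. -/
def C2Fun.swap (B : C2Fun) : C2Fun where
  Q z := B.Q z.swap
  Qa z := B.Qb z.swap
  Qb z := B.Qa z.swap
  Qaa z := B.Qbb z.swap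
  Qab z := B.Qab z.swap
  Qbb z := B.Qaa z.swap
  hQ z := by
    refine ((B.hQ z.swap).comp z
      ((ContinuousLinearEquiv.prodComm ℝ ℝ ℝ).hasFDerivAt)).congr_fderiv ?_
    ext <;> simp
  hQa z := by
    refine ((B.hQb z.swap).comp z
      ((ContinuousLinearEquiv.prodComm ℝ ℝ ℝ).hasFDerivAt)).congr_fderiv ?_
    ext <;> simp
  hQb z := by
    refine ((B.hQa z.swap).comp z
      ((ContinuousLinearEquiv.prodComm ℝ ℝ ℝ).hasFDerivAt)).congr_fderiv ?_
    ext <;> simp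
  cQaa := B.cQbb.comp continuous_swap
  cQab := B.cQab.comp continuous_swap
  cQbb := B.cQaa.comp continuous_swap

/-- The case `p ≤ 2` follows from the conjugate one, `q ≥ 2`, by exchanging the variables. -/
lemma exists_bellman {p q : ℝ} (hpq : p.HolderConjugate q) :
    ∃ C : ℝ, 0 < C ∧ ∀ ε : ℝ, 0 < ε → ∃ B : C2Fun, IsBellman p q C ε B := by
  rcases le_total 2 p with hp | hp
  · exact bellman_of_two_le hp hpq
  · have hq : 2 ≤ q := by
      have h1 : 1 < p := hpq.lt
      have := hpq.mul_eq_add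
      nlinarith
    obtain ⟨C, hC, h⟩ := bellman_of_two_le hq hpq.symm
    refine ⟨C, hC, fun ε hε => ?_⟩
    obtain ⟨B, hB⟩ := h ε hε
    refine ⟨B.swap, hB.zero, fun z => hB.nonneg _, fun a b => ?_, fun z => ?_⟩
    · have := hB.le b a
      simp only [C2Fun.swap, Prod.swap_prod_mk]
      linarith
    · obtain ⟨τ, hτ, h⟩ := hB.hess z.swap
      refine ⟨τ⁻¹, inv_pos.2 hτ, fun ξ η => ?_⟩
      have := h η ξ
      simp only [C2Fun.hess, C2Fun.swap, inv_inv] at this ⊢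
      linarith

/-! ### Test functions on the plane -/

/-- The Euclidean plane. -/
abbrev E2 := EuclideanSpace ℝ (Fin 2)

/-- The standard basis vectors of the plane. -/
noncomputable def bv (i : Fin 2) : E2 := EuclideanSpace.single i 1

/-- The partial derivative `∂ᵢ f`. -/
noncomputable def pd {F : Type*} [NormedAddCommGroup F] [NormedSpace ℝ F] (i : Fin 2)
    (f : E2 → F) : E2 → F := fun x => fderiv ℝ f x (bv i)

/-- The Laplacian of a scalar function. -/
noncomputable def lap (f : E2 → ℝ) : E2 → ℝ := fun x => ∑ j : Fin 2, pd j (pd j f) x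

/-- Smooth compactly supported functions. -/
structure Test {F : Type*} [NormedAddCommGroup F] [NormedSpace ℝ F] (f : E2 → F) : Prop where
  smooth : ContDiff ℝ (⊤ : ℕ∞) f
  compact : HasCompactSupport f

lemma norm_bv (i : Fin 2) : ‖bv i‖ = 1 := by simp [bv]

lemma eq_sum_bv (y : E2) : y = ∑ j : Fin 2, y j • bv j := by
  ext j; fin_cases j <;> simp [bv, Fin.sum_univ_two]

lemma clm_apply_eq_sum {F : Type*} [NormedAddCommGroup F] [NormedSpace ℝ F] (L : E2 →L[ℝ] F)
    (y : E2) : L y = ∑ j : Fin 2, y j • L (bv j) := by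
  conv_lhs => rw [eq_sum_bv y]
  simp

section Test
variable {F : Type*} [NormedAddCommGroup F] [NormedSpace ℝ F] {f g : E2 → F}

lemma Test.differentiable (hf : Test f) : Differentiable ℝ f :=
  hf.smooth.differentiable (by simp)

lemma Test.continuous (hf : Test f) : Continuous f := hf.smooth.continuous

lemma Test.pd (hf : Test f) (i : Fin 2) : Test (pd i f) where
  smooth := (hf.smooth.fderiv_right (m := (⊤ : ℕ∞)) (by simp)).clm_apply contDiff_const
  compact := hf.compact.fderiv_apply (𝕜 := ℝ) (bv i)

lemma Test.add (hf : Test f) (hg : Test g) : Test (fun x => f x + g x) :=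
  ⟨hf.smooth.add hg.smooth, hf.compact.add hg.compact⟩

lemma Test.clm {G : Type*} [NormedAddCommGroup G] [NormedSpace ℝ G] (hf : Test f) (L : F →L[ℝ] G) :
    Test (fun x => L (f x)) :=
  ⟨L.contDiff.comp hf.smooth, hf.compact.comp_left (map_zero L)⟩

lemma Test.const_smul (hf : Test f) (c : ℝ) : Test (fun x => c • f x) :=
  hf.clm (c • ContinuousLinearMap.id ℝ F)

end Test

lemma Test.lap {f : E2 → ℝ} (hf : Test f) : Test (lap f) := by
  have : _root_.lap f = fun x => _root_.pd 0 (_root_.pd 0 f) x + _root_.pd 1 (_root_.pd 1 f) x := by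
    ext x; simp [_root_.lap, Fin.sum_univ_two]
  rw [this]
  exact ((hf.pd 0).pd 0).add ((hf.pd 1).pd 1)

/-- An integrable weight on the plane, used to dominate functions and their derivatives. -/
noncomputable def wt (x : E2) : ℝ := ((1 + ‖x‖) ^ 3)⁻¹

lemma wt_pos (x : E2) : 0 < wt x := by unfold wt; positivity

lemma wt_le_one (x : E2) : wt x ≤ 1 := by
  unfold wt
  apply inv_le_one_of_one_le₀
  apply one_le_pow₀
  linarith [norm_nonneg x]

lemma integrable_wt : Integrable wt := by
  have h : Integrable (fun x : E2 => (1 + ‖x‖) ^ (-(3 : ℝ))) :=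
    integrable_one_add_norm (by simp; norm_num)
  refine h.congr (Filter.Eventually.of_forall fun x => ?_)
  have : 0 < 1 + ‖x‖ := by positivity
  simp only [wt]
  rw [Real.rpow_neg this.le]; norm_cast

lemma integrable_of_le_wt {f : E2 → ℝ} (hf : Continuous f) {C : ℝ} (h : ∀ x, |f x| ≤ C * wt x) :
    Integrable f :=
  (integrable_wt.const_mul C).mono' hf.aestronglyMeasurable (Filter.Eventually.of_forall h)

lemma Test.exists_bound {F : Type*} [NormedAddCommGroup F] [NormedSpace ℝ F] {f : E2 → F}
    (hf : Test f) : ∃ C : ℝ, 0 ≤ C ∧ ∀ x, ‖f x‖ ≤ C := by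
  obtain ⟨C, hC⟩ := hf.compact.exists_bound_of_continuous hf.continuous
  exact ⟨C, (norm_nonneg _).trans (hC 0), hC⟩

lemma Test.exists_fderiv_bound {f : E2 → ℝ}
    (hf : Test f) : ∃ C : ℝ, 0 ≤ C ∧ ∀ x, ‖fderiv ℝ f x‖ ≤ C := by
  obtain ⟨C, hC⟩ := (hf.compact.fderiv (𝕜 := ℝ)).exists_bound_of_continuous
    (hf.smooth.continuous_fderiv (by simp))
  exact ⟨C, (norm_nonneg _).trans (hC 0), hC⟩

lemma Test.exists_wt_bound {f : E2 → ℝ} (hf : Test f) :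
    ∃ C : ℝ, 0 ≤ C ∧ ∀ x, |f x| ≤ C * wt x := by
  have hc : Continuous fun x => (1 + ‖x‖) ^ 3 * f x := by
    have := hf.continuous
    fun_prop
  obtain ⟨C, hC⟩ := (hf.compact.mul_left (f := fun x => (1 + ‖x‖) ^ 3)).exists_bound_of_continuous hc
  refine ⟨C, (norm_nonneg _).trans (hC 0), fun x => ?_⟩
  have h := hC x
  simp only [Pi.mul_apply, norm_mul, Real.norm_eq_abs] at h
  rw [abs_of_nonneg (by positivity)] at h
  rw [wt, ← div_eq_mul_inv, le_div_iff₀ (by positivity)]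
  linarith

lemma Test.integrable {f : E2 → ℝ} (hf : Test f) : Integrable f :=
  hf.continuous.integrable_of_hasCompactSupport hf.compact

/-! ### The Gaussian -/

lemma exp_decay (n : ℕ) : ∃ C : ℝ, 0 < C ∧ ∀ r : ℝ, 0 ≤ r →
    Real.exp (-r ^ 2 / 2) ≤ C * ((1 + r) ^ n)⁻¹ := by
  refine ⟨n.factorial * Real.exp (3 / 2), by positivity, fun r hr => ?_⟩
  have h1 := Real.pow_div_factorial_le_exp (1 + r) (by positivity) n
  rw [div_le_iff₀ (by positivity)] at h1
  rw [← div_eq_mul_inv, le_div_iff₀ (by positivity)]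
  calc Real.exp (-r ^ 2 / 2) * (1 + r) ^ n
      ≤ Real.exp (-r ^ 2 / 2) * (Real.exp (1 + r) * n.factorial) := by gcongr
    _ = n.factorial * Real.exp (-r ^ 2 / 2 + (1 + r)) := by rw [Real.exp_add (-r ^ 2 / 2)]; ring
    _ ≤ n.factorial * Real.exp (3 / 2) := by
        gcongr
        nlinarith [sq_nonneg (r - 1)]

lemma integrable_gauss : Integrable (fun y : E2 => Real.exp (-‖y‖ ^ 2 / 2)) := by
  obtain ⟨C, _, hC⟩ := exp_decay 3
  refine integrable_of_le_wt (C := C) (by fun_prop) fun x => ?_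
  rw [abs_of_pos (Real.exp_pos _)]
  exact hC _ (norm_nonneg x)

/-- The total mass used to normalise the Gaussian. -/
noncomputable def gmass : ℝ := ∫ y : E2, Real.exp (-‖y‖ ^ 2 / 2)

lemma gmass_pos : 0 < gmass := by
  have := (integral_pos_iff_support_of_nonneg (μ := (volume : Measure E2))
    (f := fun y : E2 => Real.exp (-‖y‖ ^ 2 / 2)) (fun y => (Real.exp_pos _).le)
    integrable_gauss).2
  apply this
  have : Function.support (fun y : E2 => Real.exp (-‖y‖ ^ 2 / 2)) = Set.univ := by
    ext y; simp [Real.exp_ne_zero]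
  rw [this]
  simp

/-- The standard Gaussian density on the plane. -/
noncomputable def gk (y : E2) : ℝ := gmass⁻¹ * Real.exp (-‖y‖ ^ 2 / 2)

lemma gk_pos (y : E2) : 0 < gk y := mul_pos (inv_pos.2 gmass_pos) (Real.exp_pos _)

lemma continuous_gk : Continuous gk := by unfold gk; fun_prop

lemma integral_gk : ∫ y, gk y = 1 := by
  unfold gk
  rw [integral_const_mul]
  exact inv_mul_cancel₀ gmass_pos.ne'

lemma gk_le (y : E2) : gk y ≤ gmass⁻¹ := by
  unfold gk
  have : Real.exp (-‖y‖ ^ 2 / 2) ≤ 1 := by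
    rw [Real.exp_le_one_iff]
    have := sq_nonneg ‖y‖
    linarith
  have h := inv_pos.2 gmass_pos
  nlinarith

lemma integrable_pow_gk (n : ℕ) : Integrable (fun y => (1 + ‖y‖) ^ n * gk y) := by
  obtain ⟨C, _, hC⟩ := exp_decay (n + 3)
  have := continuous_gk
  refine integrable_of_le_wt (C := gmass⁻¹ * C) (by fun_prop) fun x => ?_
  have h1 := hC _ (norm_nonneg x)
  have h0 := gk_pos x
  rw [abs_of_pos (by positivity)]
  unfold gk wt
  have hg := inv_pos.2 gmass_pos
  calc (1 + ‖x‖) ^ n * (gmass⁻¹ * Real.exp (-‖x‖ ^ 2 / 2))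
      ≤ (1 + ‖x‖) ^ n * (gmass⁻¹ * (C * ((1 + ‖x‖) ^ (n + 3))⁻¹)) := by gcongr
    _ = gmass⁻¹ * C * ((1 + ‖x‖) ^ 3)⁻¹ := by
      rw [pow_add]; field_simp

lemma integrable_gk : Integrable gk := by simpa using integrable_pow_gk 0

lemma integrable_norm_gk : Integrable (fun y => ‖y‖ * gk y) := by
  refine (integrable_pow_gk 1).mono' (by have := continuous_gk; fun_prop)
    (Filter.Eventually.of_forall fun y => ?_)
  have := gk_pos y
  rw [norm_mul, norm_norm, Real.norm_of_nonneg this.le]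
  nlinarith

lemma hasFDerivAt_gk (y : E2) : HasFDerivAt gk (-(gk y) • innerSL ℝ y) y := by
  have h1 : HasFDerivAt (fun y : E2 => ‖y‖ ^ 2) (2 • innerSL ℝ y) y :=
    (hasStrictFDerivAt_norm_sq y).hasFDerivAt
  have h2 : HasFDerivAt (fun y : E2 => -‖y‖ ^ 2 / 2) (-innerSL ℝ y) y := by
    have := (h1.const_mul (-1 / 2 : ℝ))
    refine (this.congr_fderiv ?_).congr_of_eventuallyEq (Filter.Eventually.of_forall fun y => ?_)
    · ext v; simp; ring
    · ring
  refine (h2.exp.const_mul gmass⁻¹).congr_fderiv ?_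
  ext v; simp [gk]; ring

lemma pd_gk (j : Fin 2) (y : E2) : pd j gk y = -(y j * gk y) := by
  simp only [pd, (hasFDerivAt_gk y).fderiv]
  simp [bv, EuclideanSpace.inner_single_right]
  ring

lemma coord_le (y : E2) (j : Fin 2) : |y j| ≤ ‖y‖ := by
  simpa using PiLp.norm_apply_le (p := 2) y j

/-! ### The heat extension -/

/-- The heat extension, parametrised so that `s` is the standard deviation of the Gaussian,
i.e. the time is `s² / 2`; it solves `∂ₛ F = s Δ F`. -/
noncomputable def heat (f : E2 → ℝ) (s : ℝ) (x : E2) : ℝ := ∫ y, gk y * f (x + s • y)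

section heat
variable {f : E2 → ℝ}

lemma heat_integrable (hf : Test f) (s : ℝ) (x : E2) :
    Integrable (fun y => gk y * f (x + s • y)) := by
  obtain ⟨C, _, hC⟩ := hf.exists_bound
  have := hf.continuous
  exact integrable_gk.mul_bdd (c := C) (by fun_prop) (Filter.Eventually.of_forall fun y => hC _)

lemma heat_zero (x : E2) : heat f 0 x = f x := by
  simp [heat, integral_mul_const, integral_gk]

lemma hasFDerivAt_heat (hf : Test f) (s : ℝ) (x : E2) :
    HasFDerivAt (heat f s) (∫ y, gk y • fderiv ℝ f (x + s • y)) x := by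
  obtain ⟨C, hC0, hC⟩ := hf.exists_fderiv_bound
  have hc := hf.continuous
  have hg := continuous_gk
  have hc' : Continuous (fderiv ℝ f) := hf.smooth.continuous_fderiv (by simp)
  refine hasFDerivAt_integral_of_dominated_of_fderiv_le (s := Set.univ)
    (bound := fun y => C * gk y)
    (F' := fun x y => gk y • fderiv ℝ f (x + s • y)) Filter.univ_mem
    (Filter.Eventually.of_forall fun x => ?_) (heat_integrable hf s x) ?_ ?_ ?_ ?_
  · exact (Continuous.aestronglyMeasurable (by fun_prop))
  · exact (Continuous.aestronglyMeasurable (by fun_prop))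
  · refine Filter.Eventually.of_forall fun y x _ => ?_
    rw [norm_smul, Real.norm_of_nonneg (gk_pos y).le, mul_comm]
    exact mul_le_mul_of_nonneg_right (hC _) (gk_pos y).le
  · exact integrable_gk.const_mul C
  · refine Filter.Eventually.of_forall fun y x _ => ?_
    have h1 : HasFDerivAt (fun x => f (x + s • y)) (fderiv ℝ f (x + s • y)) x := by
      have := (hf.differentiable (x + s • y)).hasFDerivAt
      rw [hasFDerivAt_comp_add_right]
      exact this
    exact h1.const_mul (gk y)

lemma pd_heat (hf : Test f) (s : ℝ) (i : Fin 2) : pd i (heat f s) = heat (pd i f) s := by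
  ext x
  obtain ⟨C, hC0, hC⟩ := hf.exists_fderiv_bound
  have hg := continuous_gk
  have hc' : Continuous (fderiv ℝ f) := hf.smooth.continuous_fderiv (by simp)
  have hi : Integrable (fun y => gk y • fderiv ℝ f (x + s • y)) :=
    integrable_gk.smul_bdd C (Continuous.aestronglyMeasurable (by fun_prop))
      (Filter.Eventually.of_forall fun y => hC _)
  rw [pd, (hasFDerivAt_heat hf s x).fderiv, ContinuousLinearMap.integral_apply hi]
  rfl

lemma heat_differentiable (hf : Test f) (s : ℝ) : Differentiable ℝ (heat f s) :=
  fun x => (hasFDerivAt_heat hf s x).differentiableAt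

lemma heat_continuous (hf : Test f) (s : ℝ) : Continuous (heat f s) :=
  (heat_differentiable hf s).continuous

/-- Gaussian integration by parts. -/
lemma gauss_ibp (hf : Test f) (s : ℝ) (x : E2) (j : Fin 2) :
    ∫ y, gk y * (y j * f (x + s • y)) = s * heat (pd j f) s x := by
  have hg := continuous_gk
  have hc := hf.continuous
  have hpd (y : E2) : fderiv ℝ (fun y => f (x + s • y)) y (bv j) = s * pd j f (x + s • y) := by
    have h1 := (hf.differentiable (x + s • y)).hasFDerivAt
    have h2 : HasFDerivAt (fun y : E2 => x + s • y) (s • ContinuousLinearMap.id ℝ E2) y := by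
      exact ((hasFDerivAt_id y).const_smul s).const_add x
    have h3 := (h1.comp y h2).fderiv
    have h4 : (fun y => f (x + s • y)) = f ∘ fun y => x + s • y := rfl
    rw [h4, h3]
    simp [pd]
  have hgd (y : E2) : fderiv ℝ gk y (bv j) = -(y j * gk y) := pd_gk j y
  obtain ⟨C, hC0, hC⟩ := hf.exists_bound
  have hbd : Integrable (fun y : E2 => y j * gk y) := by
    refine integrable_norm_gk.mono' (Continuous.aestronglyMeasurable (by fun_prop))
      (Filter.Eventually.of_forall fun y => ?_)
    rw [norm_mul, Real.norm_of_nonneg (gk_pos y).le]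
    exact mul_le_mul_of_nonneg_right (coord_le y j) (gk_pos y).le
  have key := integral_mul_fderiv_eq_neg_fderiv_mul_of_integrable (μ := (volume : Measure E2))
    (f := gk) (g := fun y => f (x + s • y)) (v := bv j) ?_ ?_ (heat_integrable hf s x)
    (fun y _ => (hasFDerivAt_gk y).differentiableAt)
    (fun y _ => by
      have := hf.differentiable
      fun_prop)
  · simp only [hpd, hgd] at key
    have e1 : ∫ y, gk y * (s * pd j f (x + s • y)) = s * heat (pd j f) s x := by
      rw [heat, ← integral_const_mul]; congr 1; ext y; ring
    rw [← e1, key, ← integral_neg]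
    congr 1; ext y; ring
  · simp only [hgd]
    exact hbd.neg.mul_bdd (c := C) (Continuous.aestronglyMeasurable (by fun_prop))
      (Filter.Eventually.of_forall fun y => hC _)
  · simp only [hpd]
    have := (heat_integrable (hf.pd j) s x).const_mul s
    refine this.congr (Filter.Eventually.of_forall fun y => ?_)
    simp only; ring

/-- The heat equation, in the parametrisation by the standard deviation. It comes from the
Gaussian integration by parts `gauss_ibp`. -/
lemma hasDerivAt_heat (hf : Test f) (s : ℝ) (x : E2) :
    HasDerivAt (fun s => heat f s x) (s * heat (lap f) s x) s := by
  obtain ⟨C, hC0, hC⟩ := hf.exists_fderiv_bound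
  have hc := hf.continuous
  have hg := continuous_gk
  have hc' : Continuous (fderiv ℝ f) := hf.smooth.continuous_fderiv (by simp)
  have key := hasDerivAt_integral_of_dominated_loc_of_deriv_le (μ := (volume : Measure E2))
    (x₀ := s) (s := Set.univ)
    (bound := fun y => C * (‖y‖ * gk y)) (F := fun s y => gk y * f (x + s • y))
    (F' := fun s y => gk y * fderiv ℝ f (x + s • y) y) Filter.univ_mem
    (Filter.Eventually.of_forall fun x => (Continuous.aestronglyMeasurable (by fun_prop)))
    (heat_integrable hf s x) (Continuous.aestronglyMeasurable (by fun_prop))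
    (Filter.Eventually.of_forall fun y s _ => by
      rw [norm_mul, Real.norm_of_nonneg (gk_pos y).le]
      have : ‖fderiv ℝ f (x + s • y) y‖ ≤ C * ‖y‖ :=
        (ContinuousLinearMap.le_opNorm _ _).trans (by gcongr; exact hC _)
      have := mul_le_mul_of_nonneg_left this (gk_pos y).le
      linarith)
    (integrable_norm_gk.const_mul C)
    (Filter.Eventually.of_forall fun y s _ => by
      have h1 := (hf.differentiable (x + s • y)).hasFDerivAt
      have h2 : HasDerivAt (fun s : ℝ => x + s • y) y s := by
        simpa using ((hasDerivAt_id s).smul_const y).const_add x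
      exact (h1.comp_hasDerivAt s h2).const_mul (gk y))
  refine key.2.congr_deriv ?_
  have e1 : ∀ y, gk y * fderiv ℝ f (x + s • y) y =
      ∑ j : Fin 2, gk y * (y j * pd j f (x + s • y)) := by
    intro y
    rw [clm_apply_eq_sum, Finset.mul_sum]
    rfl
  have hb : ∀ j : Fin 2, Integrable (fun y : E2 => gk y * (y j * pd j f (x + s • y))) := by
    intro j
    have := (hf.pd j).continuous
    obtain ⟨C, hC0, hC⟩ := (hf.pd j).exists_bound
    refine (integrable_norm_gk.const_mul C).mono' (Continuous.aestronglyMeasurable (by fun_prop))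
      (Filter.Eventually.of_forall fun y => ?_)
    rw [norm_mul, norm_mul, Real.norm_of_nonneg (gk_pos y).le]
    have h1 : ‖y j‖ * ‖pd j f (x + s • y)‖ ≤ ‖y‖ * C :=
      mul_le_mul (coord_le y j) (hC _) (norm_nonneg _) (norm_nonneg _)
    have := mul_le_mul_of_nonneg_left h1 (gk_pos y).le
    linarith
  simp only [e1]
  rw [integral_finsetSum _ fun j _ => hb j]
  simp only [gauss_ibp (hf.pd _)]
  rw [← Finset.mul_sum]
  congr 1
  simp only [heat, lap, Finset.mul_sum]
  rw [integral_finsetSum _ fun j _ => heat_integrable ((hf.pd j).pd j) s x]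

/-- Heat extensions are dominated by the integrable weight `wt`, uniformly for bounded `s`; this
justifies differentiation under the integral and integration by parts. -/
lemma heat_decay (hf : Test f) (S : ℝ) (hS : 0 ≤ S) :
    ∃ C : ℝ, 0 ≤ C ∧ ∀ s, |s| ≤ S → ∀ x, |heat f s x| ≤ C * wt x := by
  obtain ⟨C, hC0, hC⟩ := hf.exists_wt_bound
  refine ⟨C * (1 + S) ^ 3 * ∫ y, (1 + ‖y‖) ^ 3 * gk y, ?_, fun s hs x => ?_⟩
  · have : 0 ≤ ∫ y, (1 + ‖y‖) ^ 3 * gk y :=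
      integral_nonneg fun y => by have := gk_pos y; positivity
    positivity
  · have h1 : |heat f s x| ≤ ∫ y, C * (1 + S) ^ 3 * wt x * ((1 + ‖y‖) ^ 3 * gk y) := by
      rw [← Real.norm_eq_abs]
      refine norm_integral_le_of_norm_le ((integrable_pow_gk 3).const_mul _)
        (Filter.Eventually.of_forall fun y => ?_)
      have hg := gk_pos y
      rw [norm_mul, Real.norm_of_nonneg hg.le, Real.norm_eq_abs]
      have hw : wt (x + s • y) ≤ (1 + S) ^ 3 * wt x * (1 + ‖y‖) ^ 3 := by
        unfold wt
        rw [inv_le_iff_one_le_mul₀ (by positivity)]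
        have h2 : 1 + ‖x‖ ≤ (1 + S) * (1 + ‖y‖) * (1 + ‖x + s • y‖) := by
          have g1 : ‖x‖ ≤ ‖x + s • y‖ + ‖s • y‖ := by
            simpa using norm_sub_le (x + s • y) (s • y)
          have g2 : ‖s • y‖ ≤ S * ‖y‖ := by
            rw [norm_smul]; gcongr; exact hs
          have g3 := norm_nonneg (x + s • y)
          have g4 := norm_nonneg y
          have g5 : 0 ≤ S * ‖y‖ := by positivity
          have g6 : 0 ≤ (S + ‖y‖ + S * ‖y‖) * ‖x + s • y‖ := by positivity
          nlinarith
        have h3 : (1 + ‖x‖) ^ 3 ≤ ((1 + S) * (1 + ‖y‖) * (1 + ‖x + s • y‖)) ^ 3 := by gcongr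
        calc 1 = ((1 + ‖x‖) ^ 3)⁻¹ * (1 + ‖x‖) ^ 3 := by field_simp
          _ ≤ ((1 + ‖x‖) ^ 3)⁻¹ * ((1 + S) * (1 + ‖y‖) * (1 + ‖x + s • y‖)) ^ 3 := by gcongr
          _ = _ := by ring
      calc gk y * |f (x + s • y)| ≤ gk y * (C * ((1 + S) ^ 3 * wt x * (1 + ‖y‖) ^ 3)) := by
            gcongr
            exact (hC _).trans (by gcongr)
        _ = _ := by ring
    rw [integral_const_mul] at h1
    linarith

/-- The ultracontractive bound of the heat semigroup on the plane: the sup norm is at most the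
`L¹` norm times the maximum of the Gaussian of standard deviation `s`. -/
lemma heat_sup (hf : Test f) : ∃ C : ℝ, 0 ≤ C ∧ ∀ s, 0 < s → ∀ x,
    |heat f s x| ≤ C * (s ^ 2)⁻¹ := by
  have hg := inv_pos.2 gmass_pos
  refine ⟨gmass⁻¹ * ∫ y, |f y|, mul_nonneg hg.le (integral_nonneg fun y => abs_nonneg _),
    fun s hs x => ?_⟩
  have hfInt : Integrable (fun y => |f (x + s • y)|) := by
    have h1 : Integrable (fun y => |f (x + y)|) := (hf.integrable.comp_add_left x).abs
    exact h1.comp_smul hs.ne'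
  have h1 : |heat f s x| ≤ ∫ y, gmass⁻¹ * |f (x + s • y)| := by
    rw [← Real.norm_eq_abs]
    refine norm_integral_le_of_norm_le (hfInt.const_mul _)
      (Filter.Eventually.of_forall fun y => ?_)
    rw [norm_mul, Real.norm_of_nonneg (gk_pos y).le]
    exact mul_le_mul_of_nonneg_right (gk_le y) (norm_nonneg _)
  have h2 : ∫ y, |f (x + s • y)| = (s ^ 2)⁻¹ * ∫ y, |f y| := by
    rw [Measure.integral_comp_smul volume (fun y => |f (x + y)|) s,
      integral_add_left_eq_self (fun y => |f y|) x]
    simp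
  rw [integral_const_mul, h2] at h1
  linarith

lemma heat_L1 (hf : Test f) (s : ℝ) : ∫ x, |heat f s x| ≤ ∫ x, |f x| := by
  have hc := hf.continuous
  have hg := continuous_gk
  have h2 : ∫⁻ x, ‖heat f s x‖ₑ ≤ ∫⁻ x, ‖f x‖ₑ := by
    calc ∫⁻ x, ‖heat f s x‖ₑ ≤ ∫⁻ x, ∫⁻ y, ‖gk y * f (x + s • y)‖ₑ :=
          lintegral_mono fun x => enorm_integral_le_lintegral_enorm _
      _ = ∫⁻ y, ∫⁻ x, ‖gk y * f (x + s • y)‖ₑ := by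
          rw [lintegral_lintegral_swap]
          exact Continuous.aemeasurable (by unfold Function.uncurry; fun_prop)
      _ = ∫⁻ y, ‖gk y‖ₑ * ∫⁻ x, ‖f x‖ₑ := by
          congr 1; ext y
          simp_rw [enorm_mul]
          rw [lintegral_const_mul' _ _ enorm_ne_top,
            lintegral_add_right_eq_self (fun x => ‖f x‖ₑ) (s • y)]
      _ = (∫⁻ y, ‖gk y‖ₑ) * ∫⁻ x, ‖f x‖ₑ := by
          rw [lintegral_mul_const'']
          exact Continuous.aemeasurable (by fun_prop)
      _ = 1 * ∫⁻ x, ‖f x‖ₑ := by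
          congr 1
          rw [← ofReal_integral_norm_eq_lintegral_enorm integrable_gk]
          have : ∫ y, ‖gk y‖ = 1 := by
            rw [← integral_gk]; congr 1; ext y; exact Real.norm_of_nonneg (gk_pos y).le
          rw [this]; simp
      _ = _ := one_mul _
  have e1 : ∫ x, |f x| = (∫⁻ x, ‖f x‖ₑ).toReal := integral_norm_eq_lintegral_enorm
    hc.aestronglyMeasurable
  have e2 : ∫ x, |heat f s x| = (∫⁻ x, ‖heat f s x‖ₑ).toReal := integral_norm_eq_lintegral_enorm
    (heat_continuous hf s).aestronglyMeasurable
  rw [e1, e2]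
  exact ENNReal.toReal_mono hf.integrable.2.ne h2

end heat

/-! ### Monotonicity along the heat flow -/

/-- Integration by parts for a bounded function against one dominated by the weight `wt`. -/
lemma ibp_wt {u v : E2 → ℝ} (j : Fin 2) (hu : Differentiable ℝ u) (hv : Differentiable ℝ v)
    (hu' : Continuous (pd j u)) (hv' : Continuous (pd j v)) {K K' C C' : ℝ}
    (bu : ∀ x, |u x| ≤ K) (bu' : ∀ x, |pd j u x| ≤ K')
    (bv : ∀ x, |v x| ≤ C * wt x) (bv' : ∀ x, |pd j v x| ≤ C' * wt x) :
    Integrable (fun x => u x * pd j v x) ∧ Integrable (fun x => pd j u x * v x) ∧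
    ∫ x, u x * pd j v x = -∫ x, pd j u x * v x := by
  have iv := integrable_of_le_wt hv.continuous bv
  have iv' := integrable_of_le_wt hv' bv'
  have h1 : Integrable (fun x => u x * pd j v x) :=
    iv'.bdd_mul (c := K) hu.continuous.aestronglyMeasurable (Filter.Eventually.of_forall bu)
  have h2 : Integrable (fun x => pd j u x * v x) :=
    iv.bdd_mul (c := K') hu'.aestronglyMeasurable (Filter.Eventually.of_forall bu')
  have h3 : Integrable (fun x => u x * v x) :=
    iv.bdd_mul (c := K) hu.continuous.aestronglyMeasurable (Filter.Eventually.of_forall bu)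
  exact ⟨h1, h2, integral_mul_fderiv_eq_neg_fderiv_mul_of_integrable h2 h1 h3
    (fun x _ => hu x) (fun x _ => hv x)⟩

lemma C2Fun.exists_bounds (B : C2Fun) (h0 : B.Q 0 = 0) (R : ℝ) : ∃ K : ℝ, 0 ≤ K ∧
    ∀ z : ℝ × ℝ, ‖z‖ ≤ R → |B.Q z| ≤ K * ‖z‖ ∧ |B.Qa z| ≤ K ∧ |B.Qb z| ≤ K ∧
      |B.Qaa z| ≤ K ∧ |B.Qab z| ≤ K ∧ |B.Qbb z| ≤ K := by
  have hb (g : ℝ × ℝ → ℝ) (hg : Continuous g) : ∃ K : ℝ, 0 ≤ K ∧ ∀ z, ‖z‖ ≤ R → |g z| ≤ K := by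
    obtain ⟨K, hK⟩ := (isCompact_closedBall (0 : ℝ × ℝ) R).exists_bound_of_continuousOn
      hg.continuousOn
    exact ⟨|K|, abs_nonneg _, fun z hz => (hK z (by simpa using hz)).trans (le_abs_self K)⟩
  have ca : Continuous B.Qa := continuous_iff_continuousAt.2 fun a => (B.hQa a).continuousAt
  have cb : Continuous B.Qb := continuous_iff_continuousAt.2 fun a => (B.hQb a).continuousAt
  obtain ⟨K1, p1, h1⟩ := hb _ ca
  obtain ⟨K2, p2, h2⟩ := hb _ cb
  obtain ⟨K3, p3, h3⟩ := hb _ B.cQaa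
  obtain ⟨K4, p4, h4⟩ := hb _ B.cQab
  obtain ⟨K5, p5, h5⟩ := hb _ B.cQbb
  refine ⟨K1 + K2 + K3 + K4 + K5, by positivity, fun z hz => ⟨?_, ?_, ?_, ?_, ?_, ?_⟩⟩
  · have hd : ∀ x ∈ Metric.closedBall (0 : ℝ × ℝ) R, HasFDerivWithinAt B.Q
        (B.Qa x • ContinuousLinearMap.fst ℝ ℝ ℝ + B.Qb x • ContinuousLinearMap.snd ℝ ℝ ℝ)
        (Metric.closedBall (0 : ℝ × ℝ) R) x := fun x _ => (B.hQ x).hasFDerivWithinAt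
    have hn : ∀ x ∈ Metric.closedBall (0 : ℝ × ℝ) R,
        ‖B.Qa x • ContinuousLinearMap.fst ℝ ℝ ℝ + B.Qb x • ContinuousLinearMap.snd ℝ ℝ ℝ‖
          ≤ K1 + K2 := by
      intro x hx
      have hx' : ‖x‖ ≤ R := by simpa using hx
      refine (norm_add_le _ _).trans (add_le_add ?_ ?_)
      · rw [norm_smul]
        have := ContinuousLinearMap.norm_fst_le ℝ ℝ ℝ
        exact (mul_le_of_le_one_right (norm_nonneg _) this).trans (h1 x hx')
      · rw [norm_smul]
        have := ContinuousLinearMap.norm_snd_le ℝ ℝ ℝ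
        exact (mul_le_of_le_one_right (norm_nonneg _) this).trans (h2 x hx')
    have hR : 0 ≤ R := (norm_nonneg z).trans hz
    have := (convex_closedBall (0 : ℝ × ℝ) R).norm_image_sub_le_of_norm_hasFDerivWithin_le hd hn
      (x := 0) (y := z) (by simpa using hR) (by simpa using hz)
    rw [h0, sub_zero, sub_zero] at this
    exact this.trans (mul_le_mul_of_nonneg_right (by linarith) (norm_nonneg z))
  · linarith [h1 z hz]
  · linarith [h2 z hz]
  · linarith [h3 z hz]
  · linarith [h4 z hz]
  · linarith [h5 z hz]

/-- The integral of `Q (F, H)` over the plane, where `F`, `H` are the heat extensions. -/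
noncomputable def flow (B : C2Fun) (f h : E2 → ℝ) (s : ℝ) : ℝ :=
  ∫ x, B.Q (heat f s x, heat h s x)

section flow
variable {f h : E2 → ℝ} (B : C2Fun)

/-- Integration by parts in the direction `j` turns second derivatives of the heat extensions into
the Hessian form of `Q` on their first derivatives. -/
lemma flow_terms (h0 : B.Q 0 = 0) (hf : Test f) (hh : Test h) (s : ℝ) (j : Fin 2) :
    Integrable (fun x => B.Qa (heat f s x, heat h s x) * heat (pd j (pd j f)) s x) ∧
    Integrable (fun x => B.Qb (heat f s x, heat h s x) * heat (pd j (pd j h)) s x) ∧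
    Integrable (fun x => B.hess (heat f s x, heat h s x) (heat (pd j f) s x)
      (heat (pd j h) s x)) ∧
    (∫ x, B.Qa (heat f s x, heat h s x) * heat (pd j (pd j f)) s x) +
      (∫ x, B.Qb (heat f s x, heat h s x) * heat (pd j (pd j h)) s x) =
    -∫ x, B.hess (heat f s x, heat h s x) (heat (pd j f) s x) (heat (pd j h) s x) := by
  have hpos : 0 ≤ |s| := abs_nonneg s
  obtain ⟨C1, p1, b1⟩ := heat_decay hf |s| hpos
  obtain ⟨C2, p2, b2⟩ := heat_decay hh |s| hpos
  obtain ⟨C3, p3, b3⟩ := heat_decay (hf.pd j) |s| hpos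
  obtain ⟨C4, p4, b4⟩ := heat_decay (hh.pd j) |s| hpos
  obtain ⟨C5, p5, b5⟩ := heat_decay ((hf.pd j).pd j) |s| hpos
  obtain ⟨C6, p6, b6⟩ := heat_decay ((hh.pd j).pd j) |s| hpos
  have b1 := b1 s le_rfl
  have b2 := b2 s le_rfl
  have b3 := b3 s le_rfl
  have b4 := b4 s le_rfl
  have b5 := b5 s le_rfl
  have b6 := b6 s le_rfl
  obtain ⟨K, hK0, hK⟩ := B.exists_bounds h0 (C1 + C2)
  have hz (x : E2) : ‖(heat f s x, heat h s x)‖ ≤ C1 + C2 := by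
    rw [Prod.norm_def]
    have w := wt_le_one x
    refine max_le ((b1 x).trans ?_) ((b2 x).trans ?_) <;> nlinarith
  have hK' := fun x => hK _ (hz x)
  have b3' (x : E2) : |heat (pd j f) s x| ≤ C3 := (b3 x).trans (by nlinarith [wt_le_one x])
  have b4' (x : E2) : |heat (pd j h) s x| ≤ C4 := (b4 x).trans (by nlinarith [wt_le_one x])
  have dz (x : E2) : HasFDerivAt (fun x => (heat f s x, heat h s x))
      ((fderiv ℝ (heat f s) x).prod (fderiv ℝ (heat h s) x)) x :=
    ((heat_differentiable hf s x).hasFDerivAt).prodMk ((heat_differentiable hh s x).hasFDerivAt)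
  have cz : Continuous (fun x => (heat f s x, heat h s x)) :=
    (heat_continuous hf s).prodMk (heat_continuous hh s)
  have cj1 := heat_continuous (hf.pd j) s
  have cj2 := heat_continuous (hh.pd j) s
  have caa := B.cQaa.comp cz
  have cab := B.cQab.comp cz
  have cbb := B.cQbb.comp cz
  simp only [Function.comp_def] at caa cab cbb
  have ea (x : E2) : fderiv ℝ (heat f s) x (bv j) = heat (pd j f) s x := congrFun (pd_heat hf s j) x
  have eb (x : E2) : fderiv ℝ (heat h s) x (bv j) = heat (pd j h) s x := congrFun (pd_heat hh s j) x
  have da (x : E2) := (B.hQa (heat f s x, heat h s x)).comp x (dz x)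
  have db (x : E2) := (B.hQb (heat f s x, heat h s x)).comp x (dz x)
  have pa : pd j (fun x => B.Qa (heat f s x, heat h s x)) = fun x =>
      B.Qaa (heat f s x, heat h s x) * heat (pd j f) s x +
      B.Qab (heat f s x, heat h s x) * heat (pd j h) s x := by
    ext x
    have : fderiv ℝ (fun x => B.Qa (heat f s x, heat h s x)) x = _ := (da x).fderiv
    simp [pd, this]
    rw [← ea, ← eb]
  have pb : pd j (fun x => B.Qb (heat f s x, heat h s x)) = fun x =>
      B.Qab (heat f s x, heat h s x) * heat (pd j f) s x +
      B.Qbb (heat f s x, heat h s x) * heat (pd j h) s x := by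
    ext x
    have : fderiv ℝ (fun x => B.Qb (heat f s x, heat h s x)) x = _ := (db x).fderiv
    simp [pd, this]
    rw [← ea, ← eb]
  have bnd {c d u v : ℝ} (h1 : |c| ≤ K) (h2 : |d| ≤ K) (h3 : |u| ≤ C3) (h4 : |v| ≤ C4) :
      |c * u + d * v| ≤ K * C3 + K * C4 := by
    refine (abs_add_le _ _).trans ?_
    rw [abs_mul, abs_mul]
    gcongr
  obtain ⟨i1, i2, i3⟩ := ibp_wt j (u := fun x => B.Qa (heat f s x, heat h s x))
    (v := heat (pd j f) s) (fun x => (da x).differentiableAt) (heat_differentiable (hf.pd j) s)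
    (by rw [pa]; fun_prop) (by rw [pd_heat (hf.pd j)]; exact heat_continuous ((hf.pd j).pd j) s)
    (fun x => (hK' x).2.1)
    (fun x => by
      rw [pa]; exact bnd (hK' x).2.2.2.1 (hK' x).2.2.2.2.1 (b3' x) (b4' x)) b3
    (by rw [pd_heat (hf.pd j)]; exact b5)
  obtain ⟨k1, k2, k3⟩ := ibp_wt j (u := fun x => B.Qb (heat f s x, heat h s x))
    (v := heat (pd j h) s) (fun x => (db x).differentiableAt) (heat_differentiable (hh.pd j) s)
    (by rw [pb]; fun_prop) (by rw [pd_heat (hh.pd j)]; exact heat_continuous ((hh.pd j).pd j) s)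
    (fun x => (hK' x).2.2.1)
    (fun x => by
      rw [pb]; exact bnd (hK' x).2.2.2.2.1 (hK' x).2.2.2.2.2 (b3' x) (b4' x)) b4
    (by rw [pd_heat (hh.pd j)]; exact b6)
  rw [pd_heat (hf.pd j)] at i1 i3
  rw [pd_heat (hh.pd j)] at k1 k3
  have hess_eq : (fun x => B.hess (heat f s x, heat h s x) (heat (pd j f) s x)
      (heat (pd j h) s x)) = fun x => pd j (fun x => B.Qa (heat f s x, heat h s x)) x *
        heat (pd j f) s x + pd j (fun x => B.Qb (heat f s x, heat h s x)) x *
        heat (pd j h) s x := by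
    ext x
    rw [pa, pb]
    simp only [C2Fun.hess]
    ring
  refine ⟨i1, k1, ?_, ?_⟩
  · rw [hess_eq]; exact i2.add k2
  · rw [hess_eq, integral_add i2 k2, i3, k3]; ring

/-- The dissipation identity: the heat equation and `flow_terms` express the derivative of the
flow through the Hessian of `Q`. -/
lemma flow_hasDerivAt (h0 : B.Q 0 = 0) (hf : Test f) (hh : Test h) (s : ℝ) :
    HasDerivAt (flow B f h) (-s * ∑ j : Fin 2, ∫ x, B.hess (heat f s x, heat h s x)
      (heat (pd j f) s x) (heat (pd j h) s x)) s := by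
  have hpos : 0 ≤ |s| + 1 := by positivity
  obtain ⟨C1, p1, b1⟩ := heat_decay hf (|s| + 1) hpos
  obtain ⟨C2, p2, b2⟩ := heat_decay hh (|s| + 1) hpos
  obtain ⟨C3, p3, b3⟩ := heat_decay hf.lap (|s| + 1) hpos
  obtain ⟨C4, p4, b4⟩ := heat_decay hh.lap (|s| + 1) hpos
  obtain ⟨K, hK0, hK⟩ := B.exists_bounds h0 (C1 + C2)
  have hzw (t : ℝ) (ht : |t| ≤ |s| + 1) (x : E2) :
      ‖(heat f t x, heat h t x)‖ ≤ (C1 + C2) * wt x := by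
    rw [Prod.norm_def]
    have w := wt_pos x
    refine max_le ((b1 t ht x).trans ?_) ((b2 t ht x).trans ?_) <;> nlinarith
  have hz (t : ℝ) (ht : |t| ≤ |s| + 1) (x : E2) :
      ‖(heat f t x, heat h t x)‖ ≤ C1 + C2 := by
    refine (hzw t ht x).trans ?_
    nlinarith [wt_le_one x]
  have cz (t : ℝ) : Continuous (fun x => (heat f t x, heat h t x)) :=
    (heat_continuous hf t).prodMk (heat_continuous hh t)
  have cQ : Continuous B.Q := continuous_iff_continuousAt.2 fun a => (B.hQ a).continuousAt
  have ca : Continuous B.Qa := continuous_iff_continuousAt.2 fun a => (B.hQa a).continuousAt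
  have cb : Continuous B.Qb := continuous_iff_continuousAt.2 fun a => (B.hQb a).continuousAt
  have ca' := ca.comp (cz s)
  have cb' := cb.comp (cz s)
  simp only [Function.comp_def] at ca' cb'
  have c1 := heat_continuous hf.lap s
  have c2 := heat_continuous hh.lap s
  have hs1 : |s| ≤ |s| + 1 := by linarith
  have hball : ∀ t ∈ Metric.ball s 1, |t| ≤ |s| + 1 := by
    intro t ht
    rw [Metric.mem_ball, Real.dist_eq] at ht
    have := abs_sub_abs_le_abs_sub t s
    linarith
  have key := hasDerivAt_integral_of_dominated_loc_of_deriv_le (μ := (volume : Measure E2))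
    (x₀ := s) (s := Metric.ball s 1)
    (bound := fun x => (K * ((|s| + 1) * C3) + K * ((|s| + 1) * C4)) * wt x)
    (F := fun s x => B.Q (heat f s x, heat h s x))
    (F' := fun s x => B.Qa (heat f s x, heat h s x) * (s * heat (lap f) s x) +
      B.Qb (heat f s x, heat h s x) * (s * heat (lap h) s x))
    (Metric.ball_mem_nhds s one_pos)
    (Filter.Eventually.of_forall fun t => (cQ.comp (cz t)).aestronglyMeasurable)
    (integrable_of_le_wt (C := K * (C1 + C2)) (cQ.comp (cz s)) fun x => by
      refine (hK _ (hz s hs1 x)).1.trans ?_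
      rw [mul_assoc]
      exact mul_le_mul_of_nonneg_left (hzw s hs1 x) hK0)
    (Continuous.aestronglyMeasurable (by fun_prop))
    (Filter.Eventually.of_forall fun x t ht => by
      have ht' := hball t ht
      have q := hK _ (hz t ht' x)
      refine (norm_add_le _ _).trans ?_
      simp only [norm_mul, Real.norm_eq_abs]
      have w := wt_pos x
      have e1 : |B.Qa (heat f t x, heat h t x)| * (|t| * |heat (lap f) t x|) ≤
          K * ((|s| + 1) * (C3 * wt x)) := by
        gcongr
        · exact q.2.1
        · exact b3 t ht' x
      have e2 : |B.Qb (heat f t x, heat h t x)| * (|t| * |heat (lap h) t x|) ≤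
          K * ((|s| + 1) * (C4 * wt x)) := by
        gcongr
        · exact q.2.2.1
        · exact b4 t ht' x
      linarith)
    (integrable_wt.const_mul _)
    (Filter.Eventually.of_forall fun x t ht => by
      have d := (B.hQ (heat f t x, heat h t x)).comp_hasDerivAt t
        ((hasDerivAt_heat hf t x).prodMk (hasDerivAt_heat hh t x))
      refine d.congr_deriv ?_
      simp)
  refine key.2.congr_deriv ?_
  have hl (g : E2 → ℝ) (hg : Test g) (x : E2) :
      heat (lap g) s x = ∑ j : Fin 2, heat (pd j (pd j g)) s x := by
    simp only [heat, lap, Finset.mul_sum]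
    rw [integral_finsetSum _ fun j _ => heat_integrable ((hg.pd j).pd j) s x]
  have T := flow_terms B h0 hf hh s
  have e : ∀ x, B.Qa (heat f s x, heat h s x) * (s * heat (lap f) s x) +
      B.Qb (heat f s x, heat h s x) * (s * heat (lap h) s x) =
      s * ∑ j : Fin 2, (B.Qa (heat f s x, heat h s x) * heat (pd j (pd j f)) s x +
        B.Qb (heat f s x, heat h s x) * heat (pd j (pd j h)) s x) := by
    intro x
    rw [hl f hf, hl h hh]
    simp only [Fin.sum_univ_two]
    ring
  simp only [e]
  have hadd (j : Fin 2) : Integrable (fun x =>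
      B.Qa (heat f s x, heat h s x) * heat (pd j (pd j f)) s x +
        B.Qb (heat f s x, heat h s x) * heat (pd j (pd j h)) s x) := (T j).1.add (T j).2.1
  rw [integral_const_mul, integral_finsetSum _ fun j _ => hadd j,
    neg_mul, ← mul_neg, ← Finset.sum_neg_distrib]
  congr 1
  refine Finset.sum_congr rfl fun j _ => ?_
  rw [integral_add (T j).1 (T j).2.1, (T j).2.2.2]

end flow

/-- The product `(a, b) ↦ a b`, whose flow is the pairing of the two heat extensions. -/
def prodFun : C2Fun where
  Q z := z.1 * z.2
  Qa z := z.2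
  Qb z := z.1
  Qaa _ := 0
  Qab _ := 1
  Qbb _ := 0
  hQ z := by
    have hf₁ : HasFDerivAt (Prod.fst : ℝ × ℝ → ℝ) (ContinuousLinearMap.fst ℝ ℝ ℝ) z :=
      hasFDerivAt_fst
    have hf₂ : HasFDerivAt (Prod.snd : ℝ × ℝ → ℝ) (ContinuousLinearMap.snd ℝ ℝ ℝ) z :=
      hasFDerivAt_snd
    refine (hf₁.mul hf₂).congr_fderiv ?_
    ext <;> simp
  hQa z := by simpa using (hasFDerivAt_snd : HasFDerivAt (Prod.snd : ℝ × ℝ → ℝ) _ z)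
  hQb z := by simpa using (hasFDerivAt_fst : HasFDerivAt (Prod.fst : ℝ × ℝ → ℝ) _ z)
  cQaa := continuous_const
  cQab := continuous_const
  cQbb := continuous_const

/-- Comparison of two flows: `Φ ± H` is antitone on `[0, ∞)`, `Φ` is nonnegative, and `H` decays. -/
lemma abs_le_of_flow {Φ H D G : ℝ → ℝ} {C : ℝ} (hΦ : ∀ s, HasDerivAt Φ (-s * D s) s)
    (hH : ∀ s, HasDerivAt H (-s * G s) s) (hGD : ∀ s, |G s| ≤ D s) (hΦ0 : ∀ s, 0 ≤ Φ s)
    (hlim : ∀ s, 0 < s → |H s| ≤ C * (s ^ 2)⁻¹) : |H 0| ≤ Φ 0 := by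
  have main (σ : ℝ) (hσ : |σ| = 1) : 0 ≤ Φ 0 + σ * H 0 := by
    have hd (s : ℝ) : HasDerivAt (fun s => Φ s + σ * H s) (-s * D s + σ * (-s * G s)) s :=
      (hΦ s).add ((hH s).const_mul σ)
    have anti : AntitoneOn (fun s => Φ s + σ * H s) (Set.Ici 0) := by
      refine antitoneOn_of_deriv_nonpos (convex_Ici 0)
        (fun s _ => (hd s).continuousAt.continuousWithinAt)
        (fun s _ => (hd s).differentiableAt.differentiableWithinAt) fun s hs => ?_
      rw [interior_Ici, Set.mem_Ioi] at hs
      rw [(hd s).deriv]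
      have h1 : -(σ * G s) ≤ D s := by
        have := neg_abs_le (σ * G s)
        rw [abs_mul, hσ, one_mul] at this
        linarith [hGD s]
      nlinarith
    have h2 (s : ℝ) (hs : 0 < s) : -(C * (s ^ 2)⁻¹) ≤ Φ 0 + σ * H 0 := by
      have h3 := anti (Set.mem_Ici.2 le_rfl) (Set.mem_Ici.2 hs.le) hs.le
      simp only at h3
      have h4 := neg_abs_le (σ * H s)
      rw [abs_mul, hσ, one_mul] at h4
      linarith [hlim s hs, hΦ0 s]
    have t : Filter.Tendsto (fun s : ℝ => -(C * (s ^ 2)⁻¹)) Filter.atTop (nhds (-(C * 0))) :=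
      ((tendsto_inv_atTop_zero.comp (Filter.tendsto_pow_atTop two_ne_zero)).const_mul C).neg
    rw [mul_zero, neg_zero] at t
    exact le_of_tendsto t ((Filter.eventually_gt_atTop 0).mono h2)
  rw [abs_le]
  have h1 := main 1 (by simp)
  have h2 := main (-1) (by simp)
  constructor <;> linarith

lemma heat_ibp {f h : E2 → ℝ} (hf : Test f) (hh : Test h) (s : ℝ) (j : Fin 2) :
    Integrable (fun x => heat f s x * heat (pd j h) s x) ∧
    Integrable (fun x => heat (pd j f) s x * heat h s x) ∧
    ∫ x, heat f s x * heat (pd j h) s x = -∫ x, heat (pd j f) s x * heat h s x := by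
  have hpos : 0 ≤ |s| := abs_nonneg s
  obtain ⟨C1, p1, b1⟩ := heat_decay hf |s| hpos
  obtain ⟨C2, p2, b2⟩ := heat_decay hh |s| hpos
  obtain ⟨C3, p3, b3⟩ := heat_decay (hf.pd j) |s| hpos
  obtain ⟨C4, p4, b4⟩ := heat_decay (hh.pd j) |s| hpos
  have := ibp_wt j (heat_differentiable hf s) (heat_differentiable hh s)
    (by rw [pd_heat hf]; exact heat_continuous (hf.pd j) s)
    (by rw [pd_heat hh]; exact heat_continuous (hh.pd j) s) (K := C1) (K' := C3)
    (fun x => (b1 s le_rfl x).trans (by nlinarith [wt_le_one x]))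
    (fun x => by
      rw [pd_heat hf]; exact (b3 s le_rfl x).trans (by nlinarith [wt_le_one x]))
    (b2 s le_rfl) (by rw [pd_heat hh]; exact b4 s le_rfl)
  rwa [pd_heat hf, pd_heat hh] at this

lemma pairing_decay {f h : E2 → ℝ} (hf : Test f) (hh : Test h) :
    ∃ C : ℝ, ∀ s, 0 < s → |flow prodFun f h s| ≤ C * (s ^ 2)⁻¹ := by
  obtain ⟨C, hC0, hC⟩ := heat_sup hf
  refine ⟨C * ∫ x, |h x|, fun s hs => ?_⟩
  obtain ⟨C2, p2, b2⟩ := heat_decay hh |s| (abs_nonneg s)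
  have hi := (integrable_of_le_wt (heat_continuous hh s) (b2 s le_rfl)).abs
  have h1 : |flow prodFun f h s| ≤ ∫ x, C * (s ^ 2)⁻¹ * |heat h s x| := by
    rw [← Real.norm_eq_abs]
    refine norm_integral_le_of_norm_le (hi.const_mul _) (Filter.Eventually.of_forall fun x => ?_)
    simp only [prodFun, norm_mul, Real.norm_eq_abs]
    exact mul_le_mul_of_nonneg_right (hC s hs x) (abs_nonneg _)
  rw [integral_const_mul] at h1
  have h2 := mul_le_mul_of_nonneg_left (heat_L1 hh s) (by positivity : 0 ≤ C * (s ^ 2)⁻¹)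
  linarith

/-- The heat-flow argument: the dissipation of the pairing of `ψ` and `h`, rewritten through
`Δψ = ∑ₖ ∂_{v k} ∂_{w k} fₖ`, is dominated by the dissipation of the Bellman flows of `(fₖ, h)`. -/
lemma pairing_le_flow {p q C ε : ℝ} {B : C2Fun} (hB : IsBellman p q C ε B)
    {ψ h : E2 → ℝ} {f : Fin 2 → E2 → ℝ} {v w : Fin 2 → Fin 2}
    (hψ : Test ψ) (hh : Test h) (hf : ∀ k, Test (f k))
    (hlap : ∀ x, lap ψ x = ∑ k : Fin 2, pd (v k) (pd (w k) (f k)) x) :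
    |∫ x, ψ x * h x| ≤ ∑ k : Fin 2, ∫ x, B.Q (f k x, h x) := by
  obtain ⟨C', hC'⟩ := pairing_decay hψ hh
  have hd := flow_hasDerivAt prodFun (by simp [prodFun]) hψ hh
  have hk (k : Fin 2) := flow_hasDerivAt B hB.zero (hf k) hh
  set D : ℝ → ℝ := fun s => ∑ k : Fin 2, ∑ j : Fin 2, ∫ x, B.hess (heat (f k) s x, heat h s x)
      (heat (pd j (f k)) s x) (heat (pd j h) s x) with hD
  set G : ℝ → ℝ := fun s => ∑ j : Fin 2, ∫ x, prodFun.hess (heat ψ s x, heat h s x)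
      (heat (pd j ψ) s x) (heat (pd j h) s x) with hG
  have hΦ : ∀ s, HasDerivAt (fun s => ∑ k : Fin 2, flow B (f k) h s) (-s * D s) s := by
    intro s
    rw [hD]
    simp only
    rw [Finset.mul_sum]
    exact HasDerivAt.fun_sum fun k _ => hk k s
  have hGeq (s : ℝ) : G s = ∑ k : Fin 2,
      ∫ x, 2 * (heat (pd (w k) (f k)) s x * heat (pd (v k) h) s x) := by
    have i1 (j : Fin 2) := heat_ibp (hψ.pd j) hh s j
    have i2 (k : Fin 2) := heat_ibp ((hf k).pd (w k)) hh s (v k)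
    have hl (x : E2) : ∑ j : Fin 2, heat (pd j (pd j ψ)) s x =
        ∑ k : Fin 2, heat (pd (v k) (pd (w k) (f k))) s x := by
      simp only [heat]
      rw [← integral_finsetSum _ fun j _ => heat_integrable ((hψ.pd j).pd j) s x,
        ← integral_finsetSum _ fun k _ => heat_integrable (((hf k).pd (w k)).pd (v k)) s x]
      simp only [← Finset.mul_sum]
      simp only [← hlap]
      rfl
    have e1 (j : Fin 2) : ∫ x, prodFun.hess (heat ψ s x, heat h s x)
        (heat (pd j ψ) s x) (heat (pd j h) s x) =
        -(2 * ∫ x, heat (pd j (pd j ψ)) s x * heat h s x) := by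
      have : ∀ x, prodFun.hess (heat ψ s x, heat h s x) (heat (pd j ψ) s x) (heat (pd j h) s x)
          = 2 * (heat (pd j ψ) s x * heat (pd j h) s x) := by
        intro x; simp only [C2Fun.hess, prodFun]; ring
      simp only [this]
      rw [integral_const_mul, (i1 j).2.2]
      ring
    rw [hG]
    simp only [e1]
    simp only [integral_const_mul, (i2 _).2.2]
    rw [Finset.sum_neg_distrib, ← Finset.mul_sum, ← Finset.mul_sum, Finset.sum_neg_distrib,
      ← integral_finsetSum _ fun j _ => (i1 j).2.1, ← integral_finsetSum _ fun k _ => (i2 k).2.1]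
    simp only [← Finset.sum_mul, hl]
    ring
  have hGD : ∀ s, |G s| ≤ D s := by
    intro s
    rw [hGeq, hD]
    refine (Finset.abs_sum_le_sum_abs _ _).trans (Finset.sum_le_sum fun k _ => ?_)
    have T := fun j => (flow_terms B hB.zero (hf k) hh s j).2.2.1
    rw [← integral_finsetSum _ fun j _ => T j, ← Real.norm_eq_abs]
    refine norm_integral_le_of_norm_le (integrable_finsetSum _ fun j _ => T j)
      (Filter.Eventually.of_forall fun x => ?_)
    obtain ⟨τ, hτ, hh⟩ := hB.hess (heat (f k) s x, heat h s x)
    refine le_trans ?_ (Finset.sum_le_sum fun j _ => hh _ _)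
    have hτ' := inv_pos.2 hτ
    have m1 := Finset.single_le_sum
      (f := fun j => τ * heat (pd j (f k)) s x ^ 2)
      (fun j _ => by positivity) (Finset.mem_univ (w k))
    have m2 := Finset.single_le_sum
      (f := fun j => τ⁻¹ * heat (pd j h) s x ^ 2)
      (fun j _ => by positivity) (Finset.mem_univ (v k))
    rw [Finset.sum_add_distrib]
    refine le_trans ?_ (add_le_add m1 m2)
    rw [Real.norm_eq_abs, abs_mul, abs_mul, abs_two, ← sq_abs, ← sq_abs (heat (pd (v k) h) s x)]
    set a := |heat (pd (w k) (f k)) s x|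
    set b := |heat (pd (v k) h) s x|
    have e : τ * a ^ 2 + τ⁻¹ * b ^ 2 - 2 * (a * b) = τ * (a - τ⁻¹ * b) ^ 2 := by
      field_simp; ring
    have : 0 ≤ τ * (a - τ⁻¹ * b) ^ 2 := by positivity
    linarith
  have := abs_le_of_flow hΦ hd hGD
    (fun s => Finset.sum_nonneg fun k _ => integral_nonneg fun x => hB.nonneg _) hC'
  simpa [flow, heat_zero, prodFun] using this

lemma Test.integrable_rpow {f : E2 → ℝ} (hf : Test f) {p : ℝ} (hp : 0 < p) :
    Integrable (fun x => |f x| ^ p) := by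
  refine Continuous.integrable_of_hasCompactSupport
    (hf.continuous.abs.rpow_const fun _ => Or.inr hp.le) ?_
  exact hf.compact.comp_left (g := fun t => |t| ^ p) (by simp [hp.ne'])

/-- The bilinear estimate: if `Δψ = ∑ₖ ∂_{v k} ∂_{w k} fₖ`, then the pairing of `ψ` with a test
function `h` is controlled by the integrals of `|fₖ|^p` and `|h|^q`. The regularisation of the
Bellman function is removed by letting `ε → 0`, its error being confined to the supports. -/
theorem bilinear {p q : ℝ} (hpq : p.HolderConjugate q) : ∃ C : ℝ, 0 < C ∧
    ∀ (ψ h : E2 → ℝ) (f : Fin 2 → E2 → ℝ) (v w : Fin 2 → Fin 2),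
      Test ψ → Test h → (∀ k, Test (f k)) →
      (∀ x, lap ψ x = ∑ k : Fin 2, pd (v k) (pd (w k) (f k)) x) →
      |∫ x, ψ x * h x| ≤ C * ((∑ k : Fin 2, ∫ x, |f k x| ^ p) + ∫ x, |h x| ^ q) := by
  obtain ⟨C, hC, hB⟩ := exists_bellman hpq
  have hp0 : 0 < p := hpq.pos
  have hq0 : 0 < q := hpq.symm.pos
  refine ⟨2 * C, by positivity, fun ψ h f v w hψ hh hf hlap => ?_⟩
  set K : Fin 2 → Set E2 := fun k => tsupport (f k) ∪ tsupport h with hK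
  have hKc (k : Fin 2) : IsCompact (K k) := (hf k).compact.isCompact.union hh.compact.isCompact
  have hKm (k : Fin 2) : MeasurableSet (K k) := (hKc k).isClosed.measurableSet
  set V : ℝ := ∑ k : Fin 2, volume.real (K k) with hV
  have step (ε : ℝ) (hε : 0 < ε) : |∫ x, ψ x * h x| ≤
      C * (∑ k : Fin 2, ((∫ x, |f k x| ^ p) + ∫ x, |h x| ^ q)) + C * (ε ^ p + ε ^ q) * V := by
    obtain ⟨B, hB⟩ := hB ε hε
    refine (pairing_le_flow hB hψ hh hf hlap).trans ?_
    rw [hV, Finset.mul_sum, Finset.mul_sum, ← Finset.sum_add_distrib]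
    refine Finset.sum_le_sum fun k _ => ?_
    have i1 := (hf k).integrable_rpow hp0
    have i2 := hh.integrable_rpow hq0
    have i3 : Integrable (Set.indicator (K k) (fun _ : E2 => C * (ε ^ p + ε ^ q))) :=
      (integrable_indicator_iff (hKm k)).2 (integrableOn_const (hKc k).measure_lt_top.ne)
    have i12 : Integrable (fun x => C * (|f k x| ^ p + |h x| ^ q)) := (i1.add i2).const_mul C
    have e : C * ((∫ x, |f k x| ^ p) + ∫ x, |h x| ^ q) +
        C * (ε ^ p + ε ^ q) * volume.real (K k) =
        ∫ x, (C * (|f k x| ^ p + |h x| ^ q) +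
          Set.indicator (K k) (fun _ : E2 => C * (ε ^ p + ε ^ q)) x) := by
      rw [integral_add i12 i3, integral_const_mul, integral_add i1 i2,
        integral_indicator (hKm k), setIntegral_const, smul_eq_mul]
      ring
    rw [e]
    refine integral_mono_of_nonneg (Filter.Eventually.of_forall fun x => hB.nonneg _)
      (i12.add i3) (Filter.Eventually.of_forall fun x => ?_)
    simp only
    by_cases hx : x ∈ K k
    · rw [Set.indicator_of_mem hx]
      refine (hB.le _ _).trans (le_of_eq ?_)
      ring
    · have h1 : f k x = 0 := image_eq_zero_of_notMem_tsupport fun h => hx (Or.inl h)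
      have h2 : h x = 0 := image_eq_zero_of_notMem_tsupport fun h => hx (Or.inr h)
      have : B.Q (f k x, h x) = 0 := by rw [h1, h2]; exact hB.zero
      rw [this, Set.indicator_of_notMem hx]
      positivity
  have lim : Filter.Tendsto (fun ε : ℝ => C * (∑ k : Fin 2, ((∫ x, |f k x| ^ p) +
      ∫ x, |h x| ^ q)) + C * (ε ^ p + ε ^ q) * V) (nhdsWithin 0 (Set.Ioi 0))
      (nhds (C * (∑ k : Fin 2, ((∫ x, |f k x| ^ p) + ∫ x, |h x| ^ q)) +
        C * (0 ^ p + 0 ^ q) * V)) := by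
    apply Filter.Tendsto.mono_left _ nhdsWithin_le_nhds
    have c1 : ContinuousAt (fun ε : ℝ => ε ^ p) 0 :=
      Real.continuousAt_rpow_const _ _ (Or.inr hp0.le)
    have c2 : ContinuousAt (fun ε : ℝ => ε ^ q) 0 :=
      Real.continuousAt_rpow_const _ _ (Or.inr hq0.le)
    exact (((c1.add c2).const_mul C).mul_const V).const_add _
  have := ge_of_tendsto lim (Filter.eventually_of_mem self_mem_nhdsWithin step)
  rw [Real.zero_rpow hp0.ne', Real.zero_rpow hq0.ne', Finset.sum_add_distrib] at this
  simp only [Finset.sum_const, Finset.card_univ, Fintype.card_fin, nsmul_eq_mul] at this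
  have h1 : 0 ≤ ∑ k : Fin 2, ∫ x, |f k x| ^ p :=
    Finset.sum_nonneg fun k _ => integral_nonneg fun x => by positivity
  push_cast at this
  nlinarith

/-! ### Duality -/

/-- The regularised dual function still pairs with `a` to give half of `|a|^p`, up to `ε^p`. -/
lemma reg_dual_lower {p : ℝ} (hp : 1 < p) {ε : ℝ} (hε : 0 < ε) (a : ℝ) :
    |a| ^ p / 2 - ε ^ p ≤ a * (a * (a ^ 2 + ε ^ 2) ^ (p / 2 - 1)) := by
  have hS : 0 < a ^ 2 + ε ^ 2 := by positivity
  have e : a * (a * (a ^ 2 + ε ^ 2) ^ (p / 2 - 1)) = a ^ 2 * (a ^ 2 + ε ^ 2) ^ (p / 2 - 1) := by ring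
  rw [e]
  rcases le_total |a| ε with h | h
  · have h1 : |a| ^ p ≤ ε ^ p := Real.rpow_le_rpow (abs_nonneg _) h (by linarith)
    have h2 : 0 ≤ |a| ^ p := Real.rpow_nonneg (abs_nonneg _) _
    have h3 : 0 ≤ a ^ 2 * (a ^ 2 + ε ^ 2) ^ (p / 2 - 1) := by positivity
    linarith
  · have h1 : ε ^ 2 ≤ a ^ 2 := by rw [← sq_abs a]; gcongr
    have h2 : |a| ^ p ≤ (a ^ 2 + ε ^ 2) ^ (p / 2) := by
      have : |a| ^ p = (a ^ 2) ^ (p / 2) := by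
        rw [← sq_abs, ← Real.rpow_natCast, ← Real.rpow_mul (abs_nonneg _)]
        congr 1; push_cast; ring
      rw [this]
      exact Real.rpow_le_rpow (sq_nonneg _) (by nlinarith) (by linarith)
    have h3 : (a ^ 2 + ε ^ 2) ^ (p / 2) =
        (a ^ 2 + ε ^ 2) * (a ^ 2 + ε ^ 2) ^ (p / 2 - 1) := by
      rw [Real.rpow_sub_one hS.ne']; field_simp
    have h4 : 0 ≤ (a ^ 2 + ε ^ 2) ^ (p / 2 - 1) := by positivity
    have h5 : 0 ≤ ε ^ p := by positivity
    nlinarith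

/-- The `q`-th power of the regularised dual function is bounded by a `p`-th power. -/
lemma reg_dual_upper {p q : ℝ} (hpq : p.HolderConjugate q) {ε : ℝ} (hε : 0 < ε) (a : ℝ) :
    |a * (a ^ 2 + ε ^ 2) ^ (p / 2 - 1)| ^ q ≤ 2 ^ (p - 1) * (|a| ^ p + ε ^ p) := by
  refine le_trans ?_ (reg_le hpq.lt.le hε a)
  have hS : 0 < a ^ 2 + ε ^ 2 := by positivity
  have h1 : |a * (a ^ 2 + ε ^ 2) ^ (p / 2 - 1)| ≤ (a ^ 2 + ε ^ 2) ^ ((p - 1) / 2) := by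
    rw [abs_mul, abs_of_pos (Real.rpow_pos_of_pos hS _)]
    have h2 : |a| ≤ (a ^ 2 + ε ^ 2) ^ (1 / 2 : ℝ) := by
      rw [← Real.sqrt_eq_rpow]
      exact Real.abs_le_sqrt (by nlinarith)
    calc |a| * (a ^ 2 + ε ^ 2) ^ (p / 2 - 1)
        ≤ (a ^ 2 + ε ^ 2) ^ (1 / 2 : ℝ) * (a ^ 2 + ε ^ 2) ^ (p / 2 - 1) := by gcongr
      _ = (a ^ 2 + ε ^ 2) ^ ((p - 1) / 2) := by
        rw [← Real.rpow_add hS]; congr 1; ring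
  calc _ ≤ ((a ^ 2 + ε ^ 2) ^ ((p - 1) / 2)) ^ q :=
        Real.rpow_le_rpow (abs_nonneg _) h1 hpq.symm.pos.le
    _ = (a ^ 2 + ε ^ 2) ^ (p / 2) := by
        rw [← Real.rpow_mul hS.le]
        congr 1
        have := hpq.sub_one_mul_conj
        linarith

/-- The `L^p` estimate: testing the bilinear estimate against a multiple of
`ψ (ψ² + ε²)^(p/2 - 1)`, a smooth approximation of the dual function `ψ |ψ|^(p-2)`. -/
theorem lp_integral {p : ℝ} (hp : 1 < p) : ∃ C : ℝ, 0 < C ∧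
    ∀ (ψ : E2 → ℝ) (f : Fin 2 → E2 → ℝ) (v w : Fin 2 → Fin 2),
      Test ψ → (∀ k, Test (f k)) →
      (∀ x, lap ψ x = ∑ k : Fin 2, pd (v k) (pd (w k) (f k)) x) →
      ∫ x, |ψ x| ^ p ≤ C * ∑ k : Fin 2, ∫ x, |f k x| ^ p := by
  have hpq := Real.HolderConjugate.conjExponent hp
  set q := Real.conjExponent p with hq
  have hp0 : 0 < p := hpq.pos
  have hq1 : 0 < q - 1 := hpq.symm.sub_one_pos
  obtain ⟨C, hC, hbil⟩ := bilinear hpq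
  -- the multiple `l` is chosen so that the dual term is absorbed on the left
  set l : ℝ := (4 * C * 2 ^ (p - 1))⁻¹ ^ (q - 1)⁻¹ with hl
  have hl0 : 0 < l := by positivity
  have hlq : C * l ^ q * 2 ^ (p - 1) = l / 4 := by
    have h1 : l ^ (q - 1) = (4 * C * 2 ^ (p - 1))⁻¹ := by
      rw [hl, Real.rpow_inv_rpow (by positivity) hq1.ne']
    have h2 : l ^ q = l * l ^ (q - 1) := by
      rw [Real.rpow_sub_one hl0.ne']; field_simp
    rw [h2, h1]
    have : (0 : ℝ) < 2 ^ (p - 1) := by positivity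
    field_simp
  refine ⟨4 * C / l, by positivity, fun ψ f v w hψ hf hlap => ?_⟩
  set K := tsupport ψ with hK
  have hKc : IsCompact K := hψ.compact.isCompact
  have hKm : MeasurableSet K := hKc.isClosed.measurableSet
  set V : ℝ := volume.real K with hV
  set X := ∫ x, |ψ x| ^ p with hX
  set F := ∑ k : Fin 2, ∫ x, |f k x| ^ p with hF
  have i1 := hψ.integrable_rpow hp0
  have step (ε : ℝ) (hε : 0 < ε) : l * (X / 2 - ε ^ p * V) ≤ C * F + l / 4 * (X + ε ^ p * V) := by
    set φ : E2 → ℝ := fun x => ψ x * (ψ x ^ 2 + ε ^ 2) ^ (p / 2 - 1) with hφ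
    have tφ : Test φ := by
      refine ⟨hψ.smooth.mul (ContDiff.rpow_const_of_ne ((hψ.smooth.pow 2).add contDiff_const)
        fun x => ?_), hψ.compact.mul_right⟩
      positivity
    have i2 : Integrable (Set.indicator K (fun _ : E2 => ε ^ p)) :=
      (integrable_indicator_iff hKm).2 (integrableOn_const hKc.measure_lt_top.ne)
    have e2 : ∫ x, Set.indicator K (fun _ : E2 => ε ^ p) x = ε ^ p * V := by
      rw [integral_indicator hKm, setIntegral_const, smul_eq_mul, mul_comm]
    have lower : X / 2 - ε ^ p * V ≤ ∫ x, ψ x * φ x := by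
      rw [← e2, hX, ← integral_div, ← integral_sub (i1.div_const 2) i2]
      refine integral_mono ((i1.div_const 2).sub i2) ?_ fun x => ?_
      · exact (hψ.continuous.mul tφ.continuous).integrable_of_hasCompactSupport
          hψ.compact.mul_right
      · by_cases hx : x ∈ K
        · simp only [Set.indicator_of_mem hx]
          exact reg_dual_lower hp hε (ψ x)
        · have h1 : ψ x = 0 := image_eq_zero_of_notMem_tsupport hx
          simp [Set.indicator_of_notMem hx, h1, Real.zero_rpow hp0.ne']
    have upper : ∫ x, |φ x| ^ q ≤ 2 ^ (p - 1) * (X + ε ^ p * V) := by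
      rw [← e2, hX, ← integral_add i1 i2, ← integral_const_mul]
      refine integral_mono (tφ.integrable_rpow hpq.symm.pos) ((i1.add i2).const_mul _) fun x => ?_
      by_cases hx : x ∈ K
      · simp only [Set.indicator_of_mem hx]
        exact reg_dual_upper hpq hε (ψ x)
      · have h1 : ψ x = 0 := image_eq_zero_of_notMem_tsupport hx
        simp [Set.indicator_of_notMem hx, hφ, h1, Real.zero_rpow hp0.ne',
          Real.zero_rpow hpq.symm.pos.ne']
    have hb := hbil ψ (fun x => l • φ x) f v w hψ (tφ.const_smul l) hf hlap
    have e3 : ∫ x, ψ x * (l • φ x) = l * ∫ x, ψ x * φ x := by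
      rw [← integral_const_mul]; congr 1; ext x; simp; ring
    have e4 : ∫ x, |l • φ x| ^ q = l ^ q * ∫ x, |φ x| ^ q := by
      rw [← integral_const_mul]; congr 1; ext x
      rw [smul_eq_mul, abs_mul, abs_of_pos hl0, Real.mul_rpow hl0.le (abs_nonneg _)]
    rw [e3, e4] at hb
    calc l * (X / 2 - ε ^ p * V) ≤ l * ∫ x, ψ x * φ x := by gcongr
      _ ≤ C * (F + l ^ q * ∫ x, |φ x| ^ q) := (le_abs_self _).trans hb
      _ ≤ C * (F + l ^ q * (2 ^ (p - 1) * (X + ε ^ p * V))) := by gcongr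
      _ = C * F + (C * l ^ q * 2 ^ (p - 1)) * (X + ε ^ p * V) := by ring
      _ = _ := by rw [hlq]
  have c1 : Filter.Tendsto (fun ε : ℝ => ε ^ p) (nhdsWithin 0 (Set.Ioi 0)) (nhds 0) := by
    have : ContinuousAt (fun ε : ℝ => ε ^ p) 0 :=
      Real.continuousAt_rpow_const _ _ (Or.inr hp0.le)
    have h := this.tendsto
    rw [Real.zero_rpow hp0.ne'] at h
    exact h.mono_left nhdsWithin_le_nhds
  have key : l * (X / 2 - 0 * V) ≤ C * F + l / 4 * (X + 0 * V) := by
    refine le_of_tendsto_of_tendsto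
      (((c1.mul_const V).const_sub (X / 2)).const_mul l)
      (((c1.mul_const V).const_add X |>.const_mul (l / 4)).const_add (C * F)) ?_
    filter_upwards [self_mem_nhdsWithin] with ε hε
    exact step ε hε
  have : X * l ≤ 4 * C * F := by linarith
  calc X ≤ 4 * C * F / l := by rwa [le_div_iff₀ hl0]
    _ = 4 * C / l * F := by ring

lemma Test.eLpNorm_eq {f : E2 → ℝ} (hf : Test f) {p : ℝ} (hp : 1 < p) :
    eLpNorm f (ENNReal.ofReal p) volume = ENNReal.ofReal ((∫ x, |f x| ^ p) ^ p⁻¹) := by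
  have hm : MemLp f (ENNReal.ofReal p) volume :=
    hf.continuous.memLp_of_hasCompactSupport hf.compact
  rw [hm.eLpNorm_eq_integral_rpow_norm (by simpa using by linarith) (by simp)]
  simp [ENNReal.toReal_ofReal (by linarith : 0 ≤ p)]

/-- The `L^p` estimate in terms of norms. -/
theorem lp_norm {p : ℝ} (hp : 1 < p) : ∃ C : ℝ≥0∞, C ≠ ⊤ ∧
    ∀ (ψ : E2 → ℝ) (f : Fin 2 → E2 → ℝ) (v w : Fin 2 → Fin 2),
      Test ψ → (∀ k, Test (f k)) →
      (∀ x, lap ψ x = ∑ k : Fin 2, pd (v k) (pd (w k) (f k)) x) →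
      eLpNorm ψ (ENNReal.ofReal p) volume ≤
        C * ∑ k : Fin 2, eLpNorm (f k) (ENNReal.ofReal p) volume := by
  obtain ⟨C, hC, h⟩ := lp_integral hp
  refine ⟨ENNReal.ofReal (C ^ p⁻¹), ENNReal.ofReal_ne_top, fun ψ f v w hψ hf hlap => ?_⟩
  have hi := h ψ f v w hψ hf hlap
  simp only [hψ.eLpNorm_eq hp, (hf _).eLpNorm_eq hp]
  have n (g : E2 → ℝ) : 0 ≤ ∫ x, |g x| ^ p :=
    integral_nonneg fun x => Real.rpow_nonneg (abs_nonneg _) _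
  have hp' : 0 ≤ p⁻¹ := by positivity
  rw [← ENNReal.ofReal_sum_of_nonneg fun k _ => Real.rpow_nonneg (n _) _,
    ← ENNReal.ofReal_mul (by positivity)]
  apply ENNReal.ofReal_le_ofReal
  refine (Real.rpow_le_rpow (n ψ) hi hp').trans ?_
  rw [Real.mul_rpow hC.le (Finset.sum_nonneg fun k _ => n _)]
  gcongr
  simp only [Fin.sum_univ_two]
  exact Real.rpow_add_le_add_rpow (n _) (n _) hp' (inv_le_one_of_one_le₀ hp.le)

/-! ### Commuting partial derivatives on test functions -/

lemma pd_pd {F : Type*} [NormedAddCommGroup F] [NormedSpace ℝ F] {f : E2 → F} (hf : Test f)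
    (a b : Fin 2) (x : E2) : pd a (pd b f) x = fderiv ℝ (fderiv ℝ f) x (bv a) (bv b) := by
  have hd : DifferentiableAt ℝ (fderiv ℝ f) x :=
    ((hf.smooth.fderiv_right (m := (⊤ : ℕ∞)) (by simp)).differentiable (by simp)) x
  have : fderiv ℝ (pd b f) x = _ :=
    (hd.hasFDerivAt.clm_apply (hasFDerivAt_const (bv b) x)).fderiv
  rw [pd, this]
  simp

lemma pd_comm {f : E2 → ℝ} (hf : Test f) (i j : Fin 2) : pd i (pd j f) = pd j (pd i f) := by
  ext x
  rw [pd_pd hf, pd_pd hf]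
  refine (hf.smooth.contDiffAt (x := x)).isSymmSndFDerivAt ?_ _ _
  rw [minSmoothness_of_isRCLikeNormedField]
  exact WithTop.coe_le_coe.2 le_top

lemma pd_clm {F G : Type*} [NormedAddCommGroup F] [NormedSpace ℝ F] [NormedAddCommGroup G]
    [NormedSpace ℝ G] {f : E2 → F} (hf : Test f) (L : F →L[ℝ] G) (i : Fin 2) (x : E2) :
    pd i (fun y => L (f y)) x = L (pd i f x) := by
  have := (L.hasFDerivAt.comp x (hf.differentiable x).hasFDerivAt).fderiv
  simp only [pd]
  rw [show (fun y => L (f y)) = L ∘ f from rfl, this]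
  simp

/-- The space of real test functions. -/
def testSub : Submodule ℝ (E2 → ℝ) where
  carrier := {f | Test f}
  add_mem' hf hg := Test.add hf hg
  zero_mem' := ⟨contDiff_const, HasCompactSupport.zero⟩
  smul_mem' c _ hf := Test.const_smul hf c

/-- The partial derivative `∂ᵢ` as a linear endomorphism of the space of test functions. -/
noncomputable def D (i : Fin 2) : testSub →ₗ[ℝ] testSub where
  toFun f := ⟨pd i f.1, Test.pd f.2 i⟩
  map_add' f g := by
    ext x
    have := fderiv_add (Test.differentiable f.2 x) (Test.differentiable g.2 x)
    simp [pd, this]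
  map_smul' c f := by
    ext x
    have := fderiv_const_smul (Test.differentiable f.2 x) c
    simp [pd, this]

lemma D_comm (i j : Fin 2) (f : testSub) : D i (D j f) = D j (D i f) :=
  Subtype.ext (pd_comm f.2 i j)

/-- The components of the Lamé operator, acting on a pair of test functions. -/
noncomputable def lameComp (α β : ℝ) (U : Fin 2 → testSub) (c : Fin 2) : testSub :=
  (-α) • (∑ j, D j (D j (U c))) - (α + β) • D c (∑ j, D j (U j))

lemma lameComp_D (α β : ℝ) (U : Fin 2 → testSub) (i c : Fin 2) :
    lameComp α β (fun a => D i (U a)) c = D i (lameComp α β U c) := by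
  simp only [lameComp, map_sub, map_smul, map_sum, D_comm i]

/-- The components of a vector-valued test function. -/
noncomputable def comps {u : E2 → E2} (hu : Test u) (c : Fin 2) : testSub :=
  ⟨fun x => u x c, hu.clm (EuclideanSpace.proj c)⟩

lemma comps_pd {u : E2 → E2} (hu : Test u) (i c : Fin 2) :
    comps (hu.pd i) c = D i (comps hu c) := by
  ext x
  exact (pd_clm hu (EuclideanSpace.proj c : E2 →L[ℝ] ℝ) i x).symm

lemma lame_apply (α β : ℝ) {u : E2 → E2} (hu : Test u) (x : E2) (c : Fin 2) :
    lame α β u x c = (lameComp α β (comps hu) c).1 x := by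
  have h1 : vecDiv u = (∑ j, D j (comps hu j) : testSub).1 := by
    ext x
    have (j : Fin 2) : fderiv ℝ u x (EuclideanSpace.single j 1) j = (D j (comps hu j)).1 x :=
      congrFun (congrArg Subtype.val (comps_pd hu j j)) x
    simp [vecDiv, this, Fin.sum_univ_two]
  have h2 : gradient (vecDiv u) x c = (D c (∑ j, D j (comps hu j))).1 x := by
    have e : gradient (vecDiv u) x c = inner ℝ (gradient (vecDiv u) x) (bv c) := by
      rw [bv, EuclideanSpace.inner_single_right]
      simp
    rw [e, gradient, InnerProductSpace.toDual_symm_apply, h1]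
    rfl
  have h3 : vecLap u x c = (∑ j, D j (D j (comps hu c)) : testSub).1 x := by
    have (j : Fin 2) : iteratedFDeriv ℝ 2 u x
        ![EuclideanSpace.single j 1, EuclideanSpace.single j 1] = pd j (pd j u) x := by
      rw [iteratedFDeriv_two_apply, pd_pd hu]
      rfl
    have h (j : Fin 2) : (pd j (pd j u) x) c = (D j (D j (comps hu c))).1 x := by
      rw [← comps_pd, ← comps_pd]; rfl
    simp [vecLap, this, h, Fin.sum_univ_two]
  simp only [lame, lameComp]
  simp [h2, h3]
  ring

lemma Test.lame {u : E2 → E2} (hu : Test u) (α β : ℝ) : Test (lame α β u) := by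
  have e : _root_.lame α β u = fun x =>
      (ContinuousLinearMap.toSpanSingleton ℝ (bv 0)) ((lameComp α β (comps hu) 0).1 x) +
      (ContinuousLinearMap.toSpanSingleton ℝ (bv 1)) ((lameComp α β (comps hu) 1).1 x) := by
    ext x : 1
    rw [eq_sum_bv (_root_.lame α β u x)]
    simp [Fin.sum_univ_two, lame_apply α β hu]
  rw [e]
  exact (Test.clm (lameComp α β (comps hu) 0).2 _).add (Test.clm (lameComp α β (comps hu) 1).2 _)

lemma comps_lame {u : E2 → E2} (hu : Test u) (α β : ℝ) :
    comps (hu.lame α β) = lameComp α β (comps hu) := by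
  ext c x
  exact lame_apply α β hu x c

/-- The Lamé operator commutes with partial derivatives. -/
lemma lame_pd {u : E2 → E2} (hu : Test u) (α β : ℝ) (i : Fin 2) :
    lame α β (pd i u) = pd i (lame α β u) := by
  ext x c
  have h1 := lame_apply α β (hu.pd i) x c
  have h2 : comps (hu.pd i) = fun c => D i (comps hu c) := funext (comps_pd hu i)
  rw [h1, h2, lameComp_D, ← comps_lame, ← comps_pd]
  rfl

/-! ### The Lamé system -/

/-- The `L^p` norm of a test function. -/
noncomputable def nrm (p : ℝ) (f : testSub) : ℝ≥0∞ := eLpNorm f.1 (ENNReal.ofReal p) volume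

lemma nrm_smul (p c : ℝ) (f : testSub) : nrm p (c • f) = ‖c‖ₑ * nrm p f :=
  eLpNorm_const_smul c f.1 _ _

lemma exists_nrm_le {p : ℝ} (hp : 1 < p) : ∃ C : ℝ≥0∞, C ≠ ⊤ ∧
    ∀ (ψ : testSub) (f : Fin 2 → testSub) (v w : Fin 2 → Fin 2),
      ∑ j, D j (D j ψ) = ∑ k, D (v k) (D (w k) (f k)) → nrm p ψ ≤ C * ∑ k, nrm p (f k) := by
  obtain ⟨C, hC, h⟩ := lp_norm hp
  refine ⟨C, hC, fun ψ f v w e => h ψ.1 (fun k => (f k).1) v w ψ.2 (fun k => (f k).2) fun x => ?_⟩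
  have := congrFun (congrArg Subtype.val e) x
  simp only [Fin.sum_univ_two] at this
  simp only [Fin.sum_univ_two, lap]
  exact this

/-- Second derivatives of the solution of the Lamé system are bounded componentwise: the gradient
of `div u` is recovered from `div (Lu) = -(2α+β) Δ div u`, and then `∂ₐ∂_b u_c` from
`-α Δu = Lu + (α+β) ∇ div u`. -/
lemma exists_second_le {α β : ℝ} (hα : 0 < α) (hαβ : 0 ≤ α + β) {p : ℝ} (hp : 1 < p) :
    ∃ C : ℝ≥0∞, C ≠ ⊤ ∧ ∀ (U : Fin 2 → testSub) (a b c : Fin 2),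
      nrm p (D a (D b (U c))) ≤ C * ∑ k, nrm p (lameComp α β U k) := by
  obtain ⟨C, hC, h⟩ := exists_nrm_le hp
  have hγ : 0 < 2 * α + β := by linarith
  set A : ℝ≥0∞ := ‖-(2 * α + β)⁻¹‖ₑ with hA
  set B : ℝ≥0∞ := ‖-α⁻¹‖ₑ with hB
  set E : ℝ≥0∞ := ‖-α⁻¹ * (α + β)‖ₑ with hE
  refine ⟨C * (B + E * (C * A)), ?_, fun U a b c => ?_⟩
  · simp [ENNReal.mul_eq_top, hC, hA, hB, hE]
  have hdiv (i : Fin 2) : nrm p (D i (∑ j, D j (U j))) ≤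
      C * A * ∑ k, nrm p (lameComp α β U k) := by
    have := h (D i (∑ j, D j (U j))) (fun k => (-(2 * α + β)⁻¹) • lameComp α β U k)
      (fun _ => i) (fun k => k) (by
        simp only [lameComp, map_sub, map_smul, map_add, Fin.sum_univ_two, D_comm 1 0]
        fin_cases i
        · simp only [Fin.zero_eta, D_comm 1 0]
          match_scalars <;> field_simp <;> ring
        · simp only [Fin.mk_one, D_comm 1 0]
          match_scalars <;> field_simp <;> ring)
    simpa only [nrm_smul, ← Finset.mul_sum, ← mul_assoc] using this
  have hmain := h (D a (D b (U c))) (fun k => if k = 0 then (-α⁻¹) • lameComp α β U c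
      else (-α⁻¹ * (α + β)) • D c (∑ j, D j (U j))) (fun _ => a) (fun _ => b) (by
        simp only [Fin.sum_univ_two, if_true, one_ne_zero, if_false, ← map_add]
        have : (-α⁻¹) • lameComp α β U c + (-α⁻¹ * (α + β)) • D c (D 0 (U 0) + D 1 (U 1)) =
            D 0 (D 0 (U c)) + D 1 (D 1 (U c)) := by
          simp only [lameComp, Fin.sum_univ_two]
          match_scalars <;> field_simp <;> ring
        rw [this]
        simp only [map_add]
        rw [D_comm 0 a, D_comm 0 b, D_comm 1 a, D_comm 1 b, D_comm 0 a, D_comm 1 a,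
          D_comm 0 b, D_comm 1 b])
  refine hmain.trans ?_
  rw [mul_assoc]
  gcongr
  simp only [Fin.sum_univ_two (fun k : Fin 2 => nrm p (ite _ _ _)), if_true, one_ne_zero, if_false,
    nrm_smul]
  rw [add_mul, mul_assoc E]
  gcongr
  · exact Finset.single_le_sum (f := fun k => nrm p (lameComp α β U k)) (fun _ _ => zero_le)
      (Finset.mem_univ c)
  · exact hdiv c

/-- The operator norm of `∇^{n+1} u` is controlled by `∇^n` of the two partial derivatives. -/
lemma norm_iteratedFDeriv_succ_le {F : Type*} [NormedAddCommGroup F] [NormedSpace ℝ F]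
    {u : E2 → F} (hu : Test u) (n : ℕ) (x : E2) :
    ‖iteratedFDeriv ℝ (n + 1) u x‖ ≤ ∑ j, ‖iteratedFDeriv ℝ n (pd j u) x‖ := by
  rw [← norm_iteratedFDeriv_fderiv]
  let T (j : Fin 2) : F →L[ℝ] (E2 →L[ℝ] F) :=
    ContinuousLinearMap.smulRightL ℝ E2 F (EuclideanSpace.proj j)
  have hT (j : Fin 2) : ‖T j‖ ≤ 1 := by
    refine ContinuousLinearMap.opNorm_le_bound _ zero_le_one fun y => ?_
    refine ContinuousLinearMap.opNorm_le_bound _ (by positivity) fun z => ?_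
    simp only [T, ContinuousLinearMap.smulRightL_apply_apply, ContinuousLinearMap.smulRight_apply,
      norm_smul, one_mul]
    rw [mul_comm]
    gcongr
    simpa using coord_le z j
  have e : fderiv ℝ u = fun y => ∑ j, T j (pd j u y) := by
    ext y z
    rw [clm_apply_eq_sum]
    simp [T, pd]
  have hs (j : Fin 2) : ContDiff ℝ n (fun y => T j (pd j u y)) :=
    ((hu.pd j).clm (T j)).smooth.of_le (by exact_mod_cast le_top)
  rw [e, iteratedFDeriv_fun_sum_apply fun j _ => (hs j).contDiffAt]
  refine (norm_sum_le _ _).trans (Finset.sum_le_sum fun j _ => ?_)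
  have := (T j).norm_iteratedFDeriv_comp_left (x := x) (hu.pd j).smooth.contDiffAt (n := n)
    (by exact_mod_cast le_top)
  exact this.trans (mul_le_of_le_one_left (norm_nonneg _) (hT j))

lemma norm_iteratedFDeriv_pd_le {F : Type*} [NormedAddCommGroup F] [NormedSpace ℝ F]
    {u : E2 → F} (hu : Test u) (n : ℕ) (x : E2) (j : Fin 2) :
    ‖iteratedFDeriv ℝ n (pd j u) x‖ ≤ ‖iteratedFDeriv ℝ (n + 1) u x‖ := by
  rw [← norm_iteratedFDeriv_fderiv]
  have hs : ContDiff ℝ (⊤ : ℕ∞) (fderiv ℝ u) := hu.smooth.fderiv_right (by simp)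
  have := (ContinuousLinearMap.apply ℝ F (bv j)).norm_iteratedFDeriv_comp_left (x := x)
    hs.contDiffAt (n := n) (by exact_mod_cast le_top)
  refine le_trans this (mul_le_of_le_one_left (norm_nonneg _) ?_)
  refine ContinuousLinearMap.opNorm_le_bound _ zero_le_one fun y => ?_
  simpa [norm_bv] using y.le_opNorm (bv j)

lemma Test.aesm {F : Type*} [NormedAddCommGroup F] [NormedSpace ℝ F]
    {u : E2 → F} (hu : Test u) (n : ℕ) :
    AEStronglyMeasurable (fun x => ‖iteratedFDeriv ℝ n u x‖) volume :=
  (hu.smooth.continuous_iteratedFDeriv (m := n)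
    (by exact_mod_cast le_top)).norm.aestronglyMeasurable

lemma eLpNorm_iteratedFDeriv_succ_le {F : Type*} [NormedAddCommGroup F] [NormedSpace ℝ F]
    {u : E2 → F} (hu : Test u) (n : ℕ) {p : ℝ≥0∞} (hp : 1 ≤ p) :
    eLpNorm (iteratedFDeriv ℝ (n + 1) u) p volume ≤
      ∑ j, eLpNorm (iteratedFDeriv ℝ n (pd j u)) p volume := by
  have h1 : eLpNorm (iteratedFDeriv ℝ (n + 1) u) p volume ≤
      eLpNorm (∑ j, fun x => ‖iteratedFDeriv ℝ n (pd j u) x‖) p volume := by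
    refine eLpNorm_mono_real fun x => ?_
    simpa using norm_iteratedFDeriv_succ_le hu n x
  refine h1.trans ((eLpNorm_sum_le (fun j _ => (hu.pd j).aesm n) hp).trans ?_)
  simp only [eLpNorm_norm, le_refl]

/-- The estimate for `k = 0`: the componentwise bounds of `exists_second_le`, summed. -/
lemma exists_base {α β : ℝ} (hα : 0 < α) (hαβ : 0 ≤ α + β) {r : ℝ} (hr : 1 < r) :
    ∃ C : ℝ≥0∞, C ≠ ⊤ ∧ ∀ u : E2 → E2, Test u →
      eLpNorm (iteratedFDeriv ℝ 2 u) (ENNReal.ofReal r) volume ≤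
        C * eLpNorm (iteratedFDeriv ℝ 0 (lame α β u)) (ENNReal.ofReal r) volume := by
  obtain ⟨C, hC, h⟩ := exists_second_le hα hαβ hr
  have hr' : 1 ≤ ENNReal.ofReal r := by simpa using hr.le
  refine ⟨∑ _a : Fin 2, ∑ _b : Fin 2, ∑ _c : Fin 2, C * ∑ _k : Fin 2, 1, ?_, fun u hu => ?_⟩
  · simp [ENNReal.mul_eq_top, hC]
  simp only [Finset.sum_mul, mul_assoc, one_mul]
  refine (eLpNorm_iteratedFDeriv_succ_le hu 1 hr').trans (Finset.sum_le_sum fun a _ => ?_)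
  refine (eLpNorm_iteratedFDeriv_succ_le (hu.pd a) 0 hr').trans (Finset.sum_le_sum fun b _ => ?_)
  have h1 : eLpNorm (iteratedFDeriv ℝ 0 (pd b (pd a u))) (ENNReal.ofReal r) volume ≤
      eLpNorm (∑ c, fun x => ‖(D b (D a (comps hu c))).1 x‖) (ENNReal.ofReal r) volume := by
    refine eLpNorm_mono_real fun x => ?_
    rw [norm_iteratedFDeriv_zero]
    have e (c : Fin 2) : (D b (D a (comps hu c))).1 x = pd b (pd a u) x c := by
      rw [← comps_pd, ← comps_pd]; rfl
    simp only [Finset.sum_apply, e]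
    conv_lhs => rw [eq_sum_bv (pd b (pd a u) x)]
    refine (norm_sum_le _ _).trans (Finset.sum_le_sum fun c _ => ?_)
    rw [norm_smul, norm_bv, mul_one]
  refine h1.trans ((eLpNorm_sum_le (fun c _ =>
    (Test.continuous (D b (D a (comps hu c))).2).norm.aestronglyMeasurable) hr').trans ?_)
  refine Finset.sum_le_sum fun c _ => ?_
  rw [eLpNorm_norm]
  refine (h (comps hu) b a c).trans ?_
  gcongr with k
  refine eLpNorm_mono fun x => ?_
  rw [norm_iteratedFDeriv_zero, ← lame_apply α β hu]
  exact coord_le _ k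

lemma exists_lame_le {α β : ℝ} (hα : 0 < α) (hαβ : 0 ≤ α + β) {r : ℝ} (hr : 1 < r) (k : ℕ) :
    ∃ C : ℝ≥0∞, C ≠ ⊤ ∧ ∀ u : E2 → E2, Test u →
      eLpNorm (iteratedFDeriv ℝ (k + 2) u) (ENNReal.ofReal r) volume ≤
        C * eLpNorm (iteratedFDeriv ℝ k (lame α β u)) (ENNReal.ofReal r) volume := by
  have hr' : 1 ≤ ENNReal.ofReal r := by simpa using hr.le
  induction k with
  | zero => exact exists_base hα hαβ hr
  | succ k ih =>
    obtain ⟨C, hC, h⟩ := ih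
    refine ⟨∑ _j : Fin 2, C, by simp [ENNReal.mul_eq_top, hC], fun u hu => ?_⟩
    rw [Finset.sum_mul]
    refine (eLpNorm_iteratedFDeriv_succ_le hu (k + 2) hr').trans (Finset.sum_le_sum fun j _ => ?_)
    refine (h _ (hu.pd j)).trans ?_
    rw [lame_pd hu]
    gcongr
    exact eLpNorm_mono fun x => norm_iteratedFDeriv_pd_le (hu.lame α β) k x j

/-- `L^r` regularity estimate for the Lamé system (Lemma 2.4 of the paper):
`‖∇^{k+2} u‖_{L^r} ≤ C ‖∇^k (Lu)‖_{L^r}` with `C = C(α,β,r,k)`,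
for smooth compactly supported vector fields `u : ℝ² → ℝ²`. -/
theorem lame_regularity (α β : ℝ) (hα : 0 < α) (hαβ : 0 ≤ α + β)
    (r : ℝ) (hr : 1 < r) (k : ℕ) :
    ∃ C : ℝ≥0∞, 0 < C ∧ C < ⊤ ∧
      ∀ u : EuclideanSpace ℝ (Fin 2) → EuclideanSpace ℝ (Fin 2),
        ContDiff ℝ (⊤ : ℕ∞) u → HasCompactSupport u →
          eLpNorm (iteratedFDeriv ℝ (k + 2) u) (ENNReal.ofReal r) volume ≤
            C * eLpNorm (iteratedFDeriv ℝ k (lame α β u)) (ENNReal.ofReal r) volume := by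
  obtain ⟨C, hC, h⟩ := exists_lame_le hα hαβ hr k
  refine ⟨C + 1, by simp, by simpa [lt_top_iff_ne_top] using hC, fun u hu hc => ?_⟩
  refine (h u ⟨hu, hc⟩).trans ?_
  gcongr
  exact le_self_add
end

section
/- Let T > 0, δ ∈ ℝ, and let h : ℝ × ℝ² → ℝ and v : ℝ × ℝ² → ℝ² be twice continuously differentiable with h > 0 everywhere and ∂ₜh + v·∇h + (δ−1)·h·div v = 0 on [0,T] × ℝ². Then w := h^{−1}·∇h satisfies, pointwise on [0,T] × ℝ², ∂ₜw + (v·∇)w + (∇v)ᵀw + (δ−1)·∇(div v) = 0. -/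
/-!
Put `F = log h`, which is `C²` on space-time. Then `h⁻¹ ∇h = ∇F`, and dividing the equation for `h`
by `h` gives `∂ₜF + v·∇F + (δ-1) div v = 0`. The transport equation for `∇F` is the spatial gradient
of this identity at a fixed time: the symmetry of the second derivative of `F` on space-time turns
`∇∂ₜF` into `∂ₜ∇F` and `(∇²F)ᵀ v` into `(v·∇)∇F`, and the derivative falling on `v` gives
`(∇v)ᵀ∇F`. The equation is tested against an arbitrary vector `e`, so that only scalar identities
for the second derivative of `F` are needed.
-/

open MeasureTheory

/-- The spatial divergence of a vector field `v : ℝ² → ℝ²` at a point `y`. -/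
noncomputable def spaceDiv (v : EuclideanSpace ℝ (Fin 2) → EuclideanSpace ℝ (Fin 2))
    (y : EuclideanSpace ℝ (Fin 2)) : ℝ :=
  ∑ i : Fin 2, fderiv ℝ v y (EuclideanSpace.single i 1) i

/-- The Euclidean plane, abbreviated for use in the proof. -/
abbrev Plane : Type := EuclideanSpace ℝ (Fin 2)

/-- The transport equation satisfied by `w = h⁻¹ ∇h` (Lemma 5.1 of the paper): if
`∂ₜh + v·∇h + (δ-1) h div v = 0` on `[0,T] × ℝ²` with `h > 0` and `h, v` twice
continuously differentiable, then
`∂ₜw + (v·∇)w + (∇v)ᵀw + (δ-1)∇(div v) = 0` pointwise. -/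
theorem log_gradient_transport_equation (T : ℝ) (hT : 0 < T) (δ : ℝ)
    (h : ℝ → EuclideanSpace ℝ (Fin 2) → ℝ)
    (v : ℝ → EuclideanSpace ℝ (Fin 2) → EuclideanSpace ℝ (Fin 2))
    (hpos : ∀ t y, 0 < h t y)
    (hh : ContDiff ℝ 2 (fun p : ℝ × EuclideanSpace ℝ (Fin 2) => h p.1 p.2))
    (hv : ContDiff ℝ 2 (fun p : ℝ × EuclideanSpace ℝ (Fin 2) => v p.1 p.2))
    (hpde : ∀ t ∈ Set.Icc (0 : ℝ) T, ∀ y,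
      deriv (fun s => h s y) t + fderiv ℝ (h t) y (v t y)
        + (δ - 1) * h t y * spaceDiv (v t) y = 0) :
    ∀ t ∈ Set.Icc (0 : ℝ) T, ∀ y,
      deriv (fun s => (h s y)⁻¹ • gradient (h s) y) t
        + fderiv ℝ (fun z => (h t z)⁻¹ • gradient (h t) z) y (v t y)
        + ContinuousLinearMap.adjoint (fderiv ℝ (v t) y) ((h t y)⁻¹ • gradient (h t) y)
        + (δ - 1) • gradient (fun z => spaceDiv (v t) z) y = 0 := by
  intro t ht y
  let F : ℝ × Plane → ℝ := fun p => Real.log (h p.1 p.2)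
  let L : ℝ × Plane → (ℝ × Plane →L[ℝ] ℝ) := fderiv ℝ F
  have hF : ContDiff ℝ 2 F := hh.log fun p => (hpos p.1 p.2).ne'
  have hFd : ∀ p, HasFDerivAt F (L p) p := fun p =>
    (hF.differentiable (by norm_num) p).hasFDerivAt
  have hL : ContDiff ℝ 1 L := hF.fderiv_right (by norm_num)
  have hLd : ∀ p, HasFDerivAt L (fderiv ℝ L p) p := fun p =>
    (hL.differentiable (by norm_num) p).hasFDerivAt
  have hexp : ∀ s z, h s z = Real.exp (F (s, z)) := fun s z => (Real.exp_log (hpos s z)).symm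
  have hspace : ∀ s z, HasFDerivAt (fun x : Plane => ((s, x) : ℝ × Plane))
      (ContinuousLinearMap.inr ℝ ℝ Plane) z := fun s z => hasFDerivAt_prodMk_right s z
  have htime : ∀ s (z : Plane), HasDerivAt (fun r : ℝ => ((r, z) : ℝ × Plane)) (1, 0) s := fun s z =>
    (hasDerivAt_id s).prodMk (hasDerivAt_const s z)
  have hhx : ∀ s z, HasFDerivAt (h s)
      (h s z • (L (s, z)).comp (ContinuousLinearMap.inr ℝ ℝ Plane)) z := by
    intro s z
    have h1 := ((hFd (s, z)).comp z (hspace s z)).exp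
    have h2 : h s = fun x => Real.exp ((F ∘ fun x : Plane => ((s, x) : ℝ × Plane)) x) :=
      funext fun x => hexp s x
    rw [hexp s z, h2]
    exact h1
  have hht : ∀ s z, HasDerivAt (fun r => h r z) (h s z * L (s, z) (1, 0)) s := by
    intro s z
    have h1 := ((hFd (s, z)).comp_hasDerivAt s (htime s z)).exp
    have h2 : (fun r => h r z) = fun r => Real.exp ((F ∘ fun r : ℝ => ((r, z) : ℝ × Plane)) r) :=
      funext fun r => hexp r z
    rw [hexp s z, h2]
    exact h1
  -- Restriction of a covector on space-time to space, followed by the Riesz isomorphism.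
  let R : (ℝ × Plane →L[ℝ] ℝ) →L[ℝ] Plane :=
    LinearMap.toContinuousLinearMap
      { toFun := fun ℓ => (InnerProductSpace.toDual ℝ Plane).symm
          (ℓ.comp (ContinuousLinearMap.inr ℝ ℝ Plane))
        map_add' := fun a b => by rw [ContinuousLinearMap.add_comp, map_add]
        map_smul' := fun c a => by
          rw [ContinuousLinearMap.smul_comp, LinearIsometryEquiv.map_smulₛₗ]; rfl }
  have hR : ∀ ℓ e, inner ℝ (R ℓ) e = ℓ (0, e) := fun ℓ e => by
    change inner ℝ ((InnerProductSpace.toDual ℝ Plane).symm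
      (ℓ.comp (ContinuousLinearMap.inr ℝ ℝ Plane))) e = _
    rw [InnerProductSpace.toDual_symm_apply]
    rfl
  have hw : ∀ s z, (h s z)⁻¹ • gradient (h s) z = R (L (s, z)) := by
    intro s z
    refine ext_inner_right ℝ fun e => ?_
    have hne := (hpos s z).ne'
    rw [hR, gradient, (hhx s z).fderiv, real_inner_smul_left, InnerProductSpace.toDual_symm_apply]
    simp [hne]
  have hwt : HasDerivAt (fun s => R (L (s, y))) (R (fderiv ℝ L (t, y) (1, 0))) t :=
    R.hasFDerivAt.comp_hasDerivAt t ((hLd (t, y)).comp_hasDerivAt t (htime t y))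
  have hwx : HasFDerivAt (fun z => R (L (t, z)))
      (R.comp ((fderiv ℝ L (t, y)).comp (ContinuousLinearMap.inr ℝ ℝ Plane))) y :=
    R.hasFDerivAt.comp y ((hLd (t, y)).comp y (hspace t y))
  have hvt : ContDiff ℝ 2 (v t) := hv.comp (contDiff_const.prodMk contDiff_id)
  have hvd : HasFDerivAt (v t) (fderiv ℝ (v t) y) y :=
    (hvt.differentiable (by norm_num) y).hasFDerivAt
  have hdiv : DifferentiableAt ℝ (fun z => spaceDiv (v t) z) y := by
    have h1 : Differentiable ℝ (fderiv ℝ (v t)) :=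
      (hvt.fderiv_right (m := 1) (by norm_num)).differentiable (by norm_num)
    unfold spaceDiv
    refine DifferentiableAt.fun_sum fun i _ => ?_
    exact (EuclideanSpace.proj i : Plane →L[ℝ] ℝ).differentiableAt.comp y
      ((h1 y).clm_apply (differentiableAt_const _))
  -- The equation for `F = log h`, at the fixed time `t`.
  have hlog : ∀ z, L (t, z) (1, v t z) + (δ - 1) * spaceDiv (v t) z = 0 := by
    intro z
    have h1 := hpde t ht z
    rw [(hht t z).deriv, (hhx t z).fderiv] at h1
    have h2 : L (t, z) (1, v t z) = L (t, z) (1, 0) + L (t, z) (0, v t z) := by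
      rw [← map_add]; simp
    refine (mul_eq_zero.mp ?_).resolve_left (hpos t z).ne'
    rw [h2]
    simp only [smul_apply, ContinuousLinearMap.comp_apply, ContinuousLinearMap.inr_apply,
      smul_eq_mul] at h1
    linarith
  have hdlog := ((((hLd (t, y)).comp y (hspace t y)).clm_apply
    ((hasFDerivAt_const (1 : ℝ) y).prodMk hvd)).add (hdiv.hasFDerivAt.const_mul (δ - 1)))
  have hzero := hdlog.unique ((hasFDerivAt_const (0 : ℝ) y).congr_of_eventuallyEq
    (Filter.Eventually.of_forall hlog))
  have hsymm : ∀ a b, fderiv ℝ L (t, y) a b = fderiv ℝ L (t, y) b a := fun a b =>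
    second_derivative_symmetric hFd (hLd (t, y)) a b
  simp only [hw]
  rw [hwt.deriv, hwx.fderiv]
  refine ext_inner_right ℝ fun e => ?_
  have he := DFunLike.congr_fun hzero e
  simp only [Function.comp_apply, add_apply, ContinuousLinearMap.comp_apply,
    ContinuousLinearMap.flip_apply, ContinuousLinearMap.prod_apply, smul_apply,
    zero_apply, ContinuousLinearMap.inr_apply, smul_eq_mul] at he
  rw [hsymm] at he
  have h3 : fderiv ℝ L (t, y) (1, v t y) (0, e)
      = fderiv ℝ L (t, y) (1, 0) (0, e) + fderiv ℝ L (t, y) (0, v t y) (0, e) := by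
    rw [← add_apply, ← map_add]; simp
  rw [h3] at he
  rw [inner_add_left, inner_add_left, inner_add_left, ContinuousLinearMap.adjoint_inner_left,
    real_inner_smul_left, gradient, InnerProductSpace.toDual_symm_apply, hR, inner_zero_left,
    ContinuousLinearMap.comp_apply, hR, hR]
  simp only [ContinuousLinearMap.comp_apply, ContinuousLinearMap.inr_apply]
  linarith
end
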